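/- arXiv:1611.10315 — 2 statements merged into one kernel-verified Lean document; each statement's English description precedes it below -/
import Mathlib

section
/- For every integer h ≥ 3 there exist ε₀ = ε₀(h) > 0 and c = c(h) > 0 such that the following holds for every ε ∈ (0, ε₀) and every non-bipartite graph H on h vertices: there is n₀ = n₀(ε) such that for every n ≥ n₀ there exists a graph G on n vertices which is ε-far from being induced H-free and yet contains at most ε^{c·log(1/ε)}·n^h (not necessarily induced) copies of H. -/
open scoped Classical
open Finset

noncomputable section

/-- Number of unordered vertex pairs on which two graphs on the same vertex set differ. -/
def editDist {n : ℕ} (G H : SimpleGraph (Fin n)) : ℕ :=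
  Set.ncard {e : Sym2 (Fin n) | (e ∈ G.edgeSet ∧ e ∉ H.edgeSet) ∨ (e ∉ G.edgeSet ∧ e ∈ H.edgeSet)}

/-- `G` is `ε`-far from satisfying the graph property `P`. -/
def Far (P : ∀ n : ℕ, Set (SimpleGraph (Fin n))) {n : ℕ} (G : SimpleGraph (Fin n)) (ε : ℝ) : Prop :=
  ∀ H : SimpleGraph (Fin n), H ∈ P n → ε * (n : ℝ) ^ 2 ≤ (editDist G H : ℝ)

/-- The subgraph induced by a vertex subset `Q` of size `m`, as a graph on `Fin m`. -/
def inducedOn {n : ℕ} (G : SimpleGraph (Fin n)) {m : ℕ} (Q : Finset (Fin n))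
    (h : Q.card = m) : SimpleGraph (Fin m) :=
  G.comap fun i => ((Q.orderIsoOfFin h) i : Fin n)

/-- A graph property is easily testable if for some constant `c > 0`, for every `ε ∈ (0,1/2)`
and every graph on at least `ε ^ (-c)` vertices which is `ε`-far from `P`, at least a
`2/3`-fraction of the `⌈ε ^ (-c)⌉`-element vertex subsets induce a subgraph not satisfying `P`. -/
def EasilyTestable (P : ∀ n : ℕ, Set (SimpleGraph (Fin n))) : Prop :=
  ∃ c : ℝ, 0 < c ∧ ∀ ε : ℝ, 0 < ε → ε < 1 / 2 → ∀ n : ℕ, ∀ G : SimpleGraph (Fin n),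
    ε ^ (-c) ≤ (n : ℝ) → Far P G ε →
    (2 / 3 : ℝ) * (((Finset.univ : Finset (Fin n)).powersetCard ⌈ε ^ (-c)⌉₊).card : ℝ) ≤
      ((((Finset.univ : Finset (Fin n)).powersetCard ⌈ε ^ (-c)⌉₊).filter
        fun Q => ∃ h : Q.card = ⌈ε ^ (-c)⌉₊, inducedOn G Q h ∉ P ⌈ε ^ (-c)⌉₊).card : ℝ)

/-- The property of being induced `𝓕`-free. -/
def InducedFree (𝓕 : Set (Σ k : ℕ, SimpleGraph (Fin k))) : ∀ n : ℕ, Set (SimpleGraph (Fin n)) :=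
  fun n => {G | ∀ p ∈ 𝓕, IsEmpty (p.2 ↪g G)}

/-- A graph is bipartite: its vertex set can be partitioned into two independent sets. -/
def IsBipGraph {V : Type*} (H : SimpleGraph V) : Prop :=
  ∃ A : Set V, (∀ u ∈ A, ∀ v ∈ A, ¬ H.Adj u v) ∧ (∀ u ∉ A, ∀ v ∉ A, ¬ H.Adj u v)

/-- A graph is co-bipartite: its vertex set can be partitioned into two cliques. -/
def IsCoBipGraph {V : Type*} (H : SimpleGraph V) : Prop :=
  ∃ A : Set V, (∀ u ∈ A, ∀ v ∈ A, u ≠ v → H.Adj u v) ∧ (∀ u ∉ A, ∀ v ∉ A, u ≠ v → H.Adj u v)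

/-- A graph is split: its vertex set can be partitioned into a clique and an independent set. -/
def IsSplitGraph {V : Type*} (H : SimpleGraph V) : Prop :=
  ∃ A : Set V, (∀ u ∈ A, ∀ v ∈ A, u ≠ v → H.Adj u v) ∧ (∀ u ∉ A, ∀ v ∉ A, ¬ H.Adj u v)

/-- The number of (not necessarily induced) copies of `H` in `G`, i.e. the number of
subgraphs of `G` isomorphic to `H`. -/
def copyCount {h n : ℕ} (H : SimpleGraph (Fin h)) (G : SimpleGraph (Fin n)) : ℕ :=
  Set.ncard {K : G.Subgraph | Nonempty (H ≃g K.coe)}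

theorem core_exists {V : Type*} [Fintype V] (H : SimpleGraph V) :
    ∃ r : H →g H, ∀ φ : H →g H, ∃ ψ : H →g H, ∀ c ∈ Set.range r, r (φ (ψ c)) = c := by
  obtain ⟨r, hr⟩ : ∃ r : H →g H, ∀ r' : H →g H, (Set.range r).ncard ≤ (Set.range r').ncard := by
    obtain ⟨r, -, hr⟩ := WellFounded.has_min
      (measure (fun r : H →g H => (Set.range r).ncard)).wf Set.univ ⟨SimpleGraph.Hom.id, trivial⟩
    refine ⟨r, fun r' => ?_⟩
    have := hr r' trivial
    exact not_lt.mp this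
  refine ⟨r, fun φ => ?_⟩
  let g : H →g H := r.comp φ
  have hmaps : ∀ c ∈ Set.range r, g c ∈ Set.range r := fun c _ => ⟨φ c, rfl⟩
  have himg : g '' Set.range r = Set.range r := by
    apply Set.eq_of_subset_of_ncard_le
    · rintro _ ⟨c, hc, rfl⟩; exact hmaps c hc
    · have := hr (g.comp r)
      have e : Set.range (g.comp r) = g '' Set.range r := by
        rw [← Set.range_comp]; rfl
      rwa [e] at this
    · exact Set.toFinite _
  let gK : Set.range r → Set.range r := fun c => ⟨g c, hmaps c c.2⟩
  have hsurj : Function.Surjective gK := by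
    rintro ⟨c, hc⟩
    rw [← himg] at hc
    obtain ⟨b, hb, rfl⟩ := hc
    exact ⟨⟨b, hb⟩, rfl⟩
  have hbij : Function.Bijective gK := ⟨Finite.injective_iff_surjective.mpr hsurj, hsurj⟩
  let e : Equiv.Perm (Set.range r) := Equiv.ofBijective gK hbij
  have hpow : ∀ k : ℕ, ∃ ψ : H →g H, ∀ c : Set.range r, ψ c = ((e ^ k) c : V) := by
    intro k
    induction k with
    | zero => exact ⟨SimpleGraph.Hom.id, fun c => rfl⟩
    | succ k ih =>
      obtain ⟨ψ, hψ⟩ := ih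
      refine ⟨g.comp ψ, fun c => ?_⟩
      rw [pow_succ']
      change g (ψ c) = g ((e ^ k) c : V)
      rw [hψ]
  obtain ⟨ψ, hψ⟩ := hpow (orderOf e - 1)
  refine ⟨ψ, fun c hc => ?_⟩
  have h1 := hψ ⟨c, hc⟩
  change g (ψ c) = c
  have h2 : e * e ^ (orderOf e - 1) = 1 := by
    rw [← pow_succ', Nat.sub_add_cancel (orderOf_pos e), pow_orderOf_eq_one]
  have h3 := congrArg (fun p : Equiv.Perm (Set.range r) => ((p ⟨c, hc⟩ : Set.range r) : V)) h2
  change g ((e ^ (orderOf e - 1)) ⟨c, hc⟩ : V) = c at h3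
  exact (congrArg g h1).trans h3

theorem cycle_exists {V : Type*} (H : SimpleGraph V) (hH : ¬ IsBipGraph H)
    (r : H →g H) : ∃ (l : ℕ) (p : ℕ → V), 2 ≤ l ∧ (∀ t ≤ l, p t ∈ Set.range r) ∧
      Set.InjOn p {t | t ≤ l} ∧ (∀ t < l, H.Adj (p t) (p (t + 1))) ∧ H.Adj (p l) (p 0) := by
  let K : SimpleGraph V :=
    { Adj := fun u v => H.Adj u v ∧ u ∈ Set.range r ∧ v ∈ Set.range r
      symm := ⟨fun u v h => ⟨h.1.symm, h.2.2, h.2.1⟩⟩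
      loopless := ⟨fun u h => h.1.ne rfl⟩ }
  have hK : ¬ K.IsAcyclic := by
    intro hac
    obtain ⟨C⟩ := hac.colorable_two
    apply hH
    refine ⟨{v | C (r v) = 0}, ?_, ?_⟩
    · intro u hu v hv huv
      have : K.Adj (r u) (r v) := ⟨r.map_adj huv, ⟨u, rfl⟩, ⟨v, rfl⟩⟩
      exact C.valid this (by rw [hu, hv])
    · intro u hu v hv huv
      have : K.Adj (r u) (r v) := ⟨r.map_adj huv, ⟨u, rfl⟩, ⟨v, rfl⟩⟩
      apply C.valid this
      simp only [Set.mem_ofPred_eq] at hu hv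
      omega
  simp only [SimpleGraph.IsAcyclic, not_forall, not_not] at hK
  obtain ⟨v, c, hc⟩ := hK
  have h3 := hc.three_le_length
  have hadj : ∀ t < c.length, K.Adj (c.getVert t) (c.getVert (t + 1)) :=
    fun t ht => c.adj_getVert_succ ht
  refine ⟨c.length - 1, c.getVert, by omega, fun t ht => (hadj t (by omega)).2.1,
    hc.getVert_injOn', fun t ht => (hadj t (by omega)).1, ?_⟩
  have := (hadj (c.length - 1) (by omega)).1
  rw [Nat.sub_add_cancel (by omega), c.getVert_length] at this
  rwa [c.getVert_zero]

theorem labelling_exists {h : ℕ} (H : SimpleGraph (Fin h)) (hH : ¬ IsBipGraph H) :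
    ∃ (a : Fin h → ℕ) (l : ℕ), Function.Injective a ∧ (∀ i, a i < h * h) ∧ 2 ≤ l ∧
      ∀ φ : H →g H, ∃ q : ℕ → Fin h, Set.InjOn q {t | t ≤ l} ∧
        (∀ t < l, H.Adj (q t) (q (t + 1))) ∧ H.Adj (q l) (q 0) ∧
        (∀ t < l, a (φ (q t)) < a (φ (q (t + 1)))) := by
  obtain ⟨r, hr⟩ := core_exists H
  obtain ⟨l, p, hl, hpr, hinj, hadj, hadj0⟩ := cycle_exists H hH r
  have hlh : l < h := by
    have := Finset.card_le_card_of_injOn (s := Finset.range (l + 1)) (t := Finset.univ) p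
      (fun _ _ => by simp) (fun x hx y hy hxy => hinj (by simp at hx ⊢; omega)
        (by simp at hy ⊢; omega) hxy)
    simp at this
    omega
  let ρ : Fin h → ℕ := fun v => if hv : ∃ t, t ≤ l ∧ p t = v then hv.choose else 0
  have hρ : ∀ t ≤ l, ρ (p t) = t := by
    intro t ht
    have hv : ∃ t', t' ≤ l ∧ p t' = p t := ⟨t, ht, rfl⟩
    simp only [ρ, dif_pos hv]
    exact hinj hv.choose_spec.1 ht hv.choose_spec.2
  have hρl : ∀ v, ρ v ≤ l := by
    intro v
    by_cases hv : ∃ t, t ≤ l ∧ p t = v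
    · simp only [ρ, dif_pos hv]; exact hv.choose_spec.1
    · simp only [ρ, dif_neg hv]; omega
  refine ⟨fun i => i + h * ρ (r i), l, ?_, ?_, hl, ?_⟩
  · intro i j hij
    have h1 := congrArg (· % h) hij
    simp only [Nat.add_mul_mod_self_left, Nat.mod_eq_of_lt i.2, Nat.mod_eq_of_lt j.2] at h1
    exact Fin.ext h1
  · intro i
    have h1 := hρl (r i)
    have h2 := i.2
    simp only
    calc (i : ℕ) + h * ρ (r i) < h + h * ρ (r i) := by omega
      _ = h * (ρ (r i) + 1) := by ring
      _ ≤ h * h := Nat.mul_le_mul_left _ (by omega)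
  · intro φ
    obtain ⟨ψ, hψ⟩ := hr φ
    have key : ∀ t ≤ l, r (φ (ψ (p t))) = p t := fun t ht => hψ _ (hpr t ht)
    refine ⟨fun t => ψ (p t), ?_, fun t ht => ψ.map_adj (hadj t ht), ψ.map_adj hadj0, ?_⟩
    · intro s hs t ht hst
      apply hinj hs ht
      rw [← key s hs, ← key t ht]
      simp only at hst
      rw [hst]
    · intro t ht
      simp only
      rw [key t ht.le, key (t + 1) ht, hρ t ht.le, hρ (t + 1) ht]
      have := (φ (ψ (p t))).2
      rw [Nat.mul_add]
      omega

def ConvFree (S : Finset ℕ) (A : ℕ) : Prop :=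
  ∀ (l : ℕ) (α s : ℕ → ℕ) (s' : ℕ), (∀ t < l, 0 < α t) → ∑ t ∈ range l, α t ≤ A →
    (∀ t < l, s t ∈ S) → s' ∈ S → ∑ t ∈ range l, α t * s t = (∑ t ∈ range l, α t) * s' →
    ∀ t < l, s t = s'

theorem map_lt_pow (D : ℕ) : ∀ (n : ℕ) (x : Fin n → ℕ), (∀ i, x i < D) →
    Behrend.map D x < D ^ n := by
  intro n
  induction n with
  | zero => intro x _; simp
  | succ n ih =>
    intro x hx
    rw [Behrend.map_succ']
    have h1 := ih (x ∘ Fin.succ) (fun i => hx _)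
    have h2 := hx 0
    calc x 0 + Behrend.map D (x ∘ Fin.succ) * D < D + Behrend.map D (x ∘ Fin.succ) * D := by omega
      _ = (Behrend.map D (x ∘ Fin.succ) + 1) * D := by ring
      _ ≤ D ^ n * D := Nat.mul_le_mul_right _ h1
      _ = D ^ (n + 1) := by ring

theorem behrend_set (A n d : ℕ) (hA : 0 < A) :
    ∃ S : Finset ℕ, (∀ s ∈ S, s < (A * d) ^ n) ∧ ConvFree S A ∧
      ((d ^ n : ℕ) : ℝ) / ((n * d ^ 2 : ℕ) : ℝ) ≤ (S.card : ℝ) := by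
  obtain ⟨k, hk⟩ := Behrend.exists_large_sphere n d
  have hbox : ∀ x ∈ Behrend.sphere n d k, ∀ i, x i < d := fun x hx =>
    Behrend.mem_box.1 (Behrend.sphere_subset_box hx)
  have hdA : d ≤ A * d := Nat.le_mul_of_pos_left d hA
  refine ⟨(Behrend.sphere n d k).image (Behrend.map (A * d)), ?_, ?_, ?_⟩
  · intro s hs
    obtain ⟨x, hx, rfl⟩ := Finset.mem_image.1 hs
    exact map_lt_pow _ _ _ (fun i => (hbox x hx i).trans_le hdA)
  · intro l α s s' hα hαA hs hs' heq t ht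
    obtain ⟨y, hy, rfl⟩ := Finset.mem_image.1 hs'
    have hex : ∀ t, ∃ x : Fin n → ℕ, t < l → x ∈ Behrend.sphere n d k ∧
        Behrend.map (A * d) x = s t := by
      intro t
      by_cases h : t < l
      · obtain ⟨x, hx, hx'⟩ := Finset.mem_image.1 (hs t h)
        exact ⟨x, fun _ => ⟨hx, hx'⟩⟩
      · exact ⟨0, fun h' => absurd h' h⟩
    choose x hx using hex
    have hlpos : 0 < ∑ t ∈ range l, α t :=
      Finset.sum_pos (fun i hi => hα i (Finset.mem_range.1 hi)) ⟨t, Finset.mem_range.2 ht⟩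
    have hvec : ∑ t ∈ range l, α t • x t = (∑ t ∈ range l, α t) • y := by
      apply Behrend.map_injOn (d := A * d)
      · intro i
        rw [Finset.sum_apply]
        calc ∑ t ∈ range l, (α t • x t) i < ∑ t ∈ range l, α t * d := by
              apply Finset.sum_lt_sum_of_nonempty ⟨t, Finset.mem_range.2 ht⟩
              intro u hu
              have hu := Finset.mem_range.1 hu
              simp only [Pi.smul_apply, smul_eq_mul]
              exact Nat.mul_lt_mul_of_pos_left (hbox _ (hx u hu).1 i) (hα u hu)
          _ = (∑ t ∈ range l, α t) * d := by rw [Finset.sum_mul]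
          _ ≤ A * d := Nat.mul_le_mul_right _ hαA
      · intro i
        simp only [Pi.smul_apply, smul_eq_mul]
        exact (Nat.mul_lt_mul_of_pos_left (hbox _ hy i) hlpos).trans_le
          (Nat.mul_le_mul_right _ hαA)
      · rw [map_sum, map_nsmul, smul_eq_mul, ← heq]
        apply Finset.sum_congr rfl
        intro u hu
        rw [map_nsmul, smul_eq_mul, (hx u (Finset.mem_range.1 hu)).2]
    have hcoord : ∀ i, ∑ t ∈ range l, (α t : ℤ) * x t i = (∑ t ∈ range l, (α t : ℤ)) * y i := by
      intro i
      have := congrFun hvec i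
      rw [Finset.sum_apply] at this
      simp only [Pi.smul_apply, smul_eq_mul] at this
      exact_mod_cast this
    have hsq : ∀ z ∈ Behrend.sphere n d k, ∑ i, (z i : ℤ) ^ 2 = k := by
      intro z hz
      have := (Finset.mem_filter.1 hz).2
      exact_mod_cast this
    have hzero : ∑ t ∈ range l, (α t : ℤ) * ∑ i, ((x t i : ℤ) - y i) ^ 2 = 0 := by
      have e1 : ∀ t ∈ range l, (α t : ℤ) * ∑ i, ((x t i : ℤ) - y i) ^ 2
          = (α t : ℤ) * (2 * k) - 2 * ∑ i, (y i : ℤ) * ((α t : ℤ) * x t i) := by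
        intro u hu
        have h1 := hsq _ (hx u (Finset.mem_range.1 hu)).1
        have h2 := hsq _ hy
        have : ∑ i, ((x u i : ℤ) - y i) ^ 2 = 2 * k - 2 * ∑ i, (y i : ℤ) * x u i := by
          calc ∑ i, ((x u i : ℤ) - y i) ^ 2
              = ∑ i, ((x u i : ℤ) ^ 2 + (y i : ℤ) ^ 2 - 2 * ((y i : ℤ) * x u i)) := by
                apply Finset.sum_congr rfl; intros; ring
            _ = _ := by
                rw [Finset.sum_sub_distrib, Finset.sum_add_distrib, h1, h2, ← Finset.mul_sum]; ring
        rw [this, mul_sub, Finset.mul_sum, Finset.mul_sum, Finset.mul_sum]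
        congr 1
        apply Finset.sum_congr rfl; intros; ring
      rw [Finset.sum_congr rfl e1, Finset.sum_sub_distrib, ← Finset.mul_sum, Finset.sum_comm]
      have e2 : ∀ i ∈ (Finset.univ : Finset (Fin n)), ∑ t ∈ range l, (y i : ℤ) * ((α t : ℤ) * x t i)
          = (∑ t ∈ range l, (α t : ℤ)) * (y i : ℤ) ^ 2 := by
        intro i _
        rw [← Finset.mul_sum, hcoord]; ring
      rw [Finset.sum_congr rfl e2, ← Finset.mul_sum, hsq _ hy, ← Finset.sum_mul]
      ring
    have hnn : ∀ u ∈ range l, (0 : ℤ) ≤ (α u : ℤ) * ∑ i, ((x u i : ℤ) - y i) ^ 2 := by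
      intro u _
      positivity
    have h0 := (Finset.sum_eq_zero_iff_of_nonneg hnn).1 hzero t (Finset.mem_range.2 ht)
    have hαt : (α t : ℤ) ≠ 0 := by have := hα t ht; omega
    have h1 := (mul_eq_zero.1 h0).resolve_left hαt
    have h2 := (Finset.sum_eq_zero_iff_of_nonneg (fun i _ => sq_nonneg _)).1 h1
    have h3 : x t = y := by
      funext i
      have := h2 i (Finset.mem_univ _)
      have := pow_eq_zero_iff (two_ne_zero) |>.1 this
      omega
    rw [← (hx t ht).2, h3]
  · rw [Finset.card_image_of_injOn]
    · exact hk
    · exact Behrend.map_injOn.mono (fun x hx i => (hbox x hx i).trans_le hdA)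

def partOf (h M : ℕ) (hh : 0 < h) (v : ℕ) : Fin h := ⟨(v / M) % h, Nat.mod_lt _ hh⟩

def bG {h : ℕ} (H : SimpleGraph (Fin h)) (hh : 0 < h) (a : Fin h → ℕ) (S : Finset ℕ) (M n : ℕ) :
    SimpleGraph (Fin n) where
  Adj v w := H.Adj (partOf h M hh v) (partOf h M hh w) ∧ ∃ x s, s ∈ S ∧
    (v : ℕ) % M = x + a (partOf h M hh v) * s ∧ (w : ℕ) % M = x + a (partOf h M hh w) * s
  symm := ⟨fun _ _ hvw => ⟨hvw.1.symm, by
    obtain ⟨x, s, hs, h1, h2⟩ := hvw.2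
    exact ⟨x, s, hs, h2, h1⟩⟩⟩
  loopless := ⟨fun _ hv => hv.1.ne rfl⟩

theorem copyCount_le_homs {h n : ℕ} (hn : 0 < n) (H : SimpleGraph (Fin h)) (G : SimpleGraph (Fin n)) :
    copyCount H G ≤
      (Finset.univ.filter fun φ : Fin h → Fin n => ∀ i j, H.Adj i j → G.Adj (φ i) (φ j)).card := by
  unfold copyCount
  rw [← Set.ncard_coe_finset]
  have hch : ∀ K : G.Subgraph, ∃ φ : Fin h → Fin n, Nonempty (H ≃g K.coe) →
      K.verts = Set.range φ ∧ ∀ v w, K.Adj v w ↔ ∃ i j, H.Adj i j ∧ φ i = v ∧ φ j = w := by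
    intro K
    by_cases hK : Nonempty (H ≃g K.coe)
    · obtain ⟨e⟩ := hK
      refine ⟨fun i => (e i : Fin n), fun _ => ⟨?_, ?_⟩⟩
      · ext v
        constructor
        · intro hv
          exact ⟨e.symm ⟨v, hv⟩, by simp⟩
        · rintro ⟨i, rfl⟩
          exact (e i).2
      · intro v w
        constructor
        · intro hvw
          refine ⟨e.symm ⟨v, hvw.fst_mem⟩, e.symm ⟨w, hvw.snd_mem⟩, ?_, by simp, by simp⟩
          rw [e.symm.map_adj_iff]
          exact hvw
        · rintro ⟨i, j, hij, rfl, rfl⟩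
          exact e.map_adj_iff.2 hij
    · exact ⟨fun _ => ⟨0, hn⟩, fun h' => absurd h' hK⟩
  choose f hf using hch
  apply Set.ncard_le_ncard_of_injOn f
  · intro K hK
    obtain ⟨h1, h2⟩ := hf K hK
    simp only [Finset.coe_filter, Finset.mem_univ, true_and, Set.mem_ofPred_eq]
    intro i j hij
    exact ((h2 _ _).2 ⟨i, j, hij, rfl, rfl⟩).adj_sub
  · intro K hK K' hK' he
    obtain ⟨h1, h2⟩ := hf K hK
    obtain ⟨h1', h2'⟩ := hf K' hK'
    ext v w
    · rw [h1, h1', he]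
    · rw [h2, h2', he]

theorem homs_le {h n : ℕ} (H : SimpleGraph (Fin h)) (hh : 0 < h) (a : Fin h → ℕ) (S : Finset ℕ)
    (M l : ℕ) (ha : ∀ i, a i < h * h) (hl : 2 ≤ l)
    (hlab : ∀ φ : H →g H, ∃ q : ℕ → Fin h, Set.InjOn q {t | t ≤ l} ∧
        (∀ t < l, H.Adj (q t) (q (t + 1))) ∧ H.Adj (q l) (q 0) ∧
        (∀ t < l, a (φ (q t)) < a (φ (q (t + 1)))))
    (hS : ConvFree S (h * h)) :
    (Finset.univ.filter fun φ : Fin h → Fin n =>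
      ∀ i j, H.Adj i j → (bG H hh a S M n).Adj (φ i) (φ j)).card
      ≤ h ^ 4 * (n ^ (h - 1) * (n / (M * h) + 1)) := by
  let P : Fin n → Fin h := fun v => partOf h M hh v
  let B : (Fin h × Fin h × Fin h × Fin h) → Finset (Fin h → Fin n) := fun z =>
    Finset.univ.filter fun φ => z.1 ≠ z.2.2.1 ∧ z.2.1 ≠ z.2.2.1 ∧ P (φ z.2.2.1) = z.2.2.2 ∧
      a (P (φ z.1)) < a (P (φ z.2.1)) ∧ ∃ x s,
        (φ z.1 : ℕ) % M = x + a (P (φ z.1)) * s ∧ (φ z.2.1 : ℕ) % M = x + a (P (φ z.2.1)) * s ∧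
        (φ z.2.2.1 : ℕ) % M = x + a z.2.2.2 * s
  have hsub : (Finset.univ.filter fun φ : Fin h → Fin n =>
      ∀ i j, H.Adj i j → (bG H hh a S M n).Adj (φ i) (φ j)) ⊆ Finset.univ.biUnion B := by
    intro φ hφ
    simp only [Finset.mem_filter, Finset.mem_univ, true_and] at hφ
    let φ' : H →g H := ⟨fun i => P (φ i), fun {i j} hij => (hφ i j hij).1⟩
    obtain ⟨q, hq, hadj, hadj0, hlt⟩ := hlab φ'
    let u : ℕ → ℕ := fun t => (φ (q t) : ℕ) % M
    let b : ℕ → ℕ := fun t => a (P (φ (q t)))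
    have hb : ∀ t < l, b t < b (t + 1) := hlt
    have hbmono : ∀ k ≤ l, b 0 + ∑ t ∈ range k, (b (t + 1) - b t) = b k := by
      intro k
      induction k with
      | zero => intro _; simp
      | succ k ih =>
        intro hk
        rw [Finset.sum_range_succ, ← add_assoc, ih (by omega)]
        have := hb k (by omega)
        omega
    have hstep : ∀ t, ∃ s, t < l → s ∈ S ∧ u (t + 1) = u t + (b (t + 1) - b t) * s := by
      intro t
      by_cases ht : t < l
      · obtain ⟨x, s, hs, h1, h2⟩ := (hφ _ _ (hadj t ht)).2
        refine ⟨s, fun _ => ⟨hs, ?_⟩⟩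
        change u t = x + b t * s at h1
        change u (t + 1) = x + b (t + 1) * s at h2
        rw [h1, h2, add_assoc, ← add_mul]
        have := hb t ht
        rw [Nat.add_sub_cancel' this.le]
      · exact ⟨0, fun h' => absurd h' ht⟩
    choose s hs using hstep
    have husum : ∀ k ≤ l, u 0 + ∑ t ∈ range k, (b (t + 1) - b t) * s t = u k := by
      intro k
      induction k with
      | zero => intro _; simp
      | succ k ih =>
        intro hk
        rw [Finset.sum_range_succ, ← add_assoc, ih (by omega), (hs k (by omega)).2]
    obtain ⟨x, s', hs', h1, h2⟩ := (hφ _ _ hadj0).2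
    change u l = x + b l * s' at h1
    change u 0 = x + b 0 * s' at h2
    have hall : ∀ t < l, s t = s' := by
      apply hS l (fun t => b (t + 1) - b t) s s'
      · intro t ht
        have := hb t ht
        omega
      · have e1 := hbmono l le_rfl
        have e2 : b l < h * h := ha _
        omega
      · exact fun t ht => (hs t ht).1
      · exact hs'
      · have e1 := husum l le_rfl
        have e2 := hbmono l le_rfl
        rw [h1, h2, ← e2, add_mul] at e1
        omega
    have hb0l : b 0 < b l := by
      have e2 := hbmono l le_rfl
      have : 0 < ∑ t ∈ range l, (b (t + 1) - b t) := by
        apply Finset.sum_pos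
        · intro t ht
          have := hb t (Finset.mem_range.1 ht)
          omega
        · exact ⟨0, Finset.mem_range.2 (by omega)⟩
      omega
    have hu1 : u 1 = x + b 1 * s' := by
      have e1 := (hs 0 (by omega)).2
      rw [hall 0 (by omega), h2, add_assoc, ← add_mul,
        Nat.add_sub_cancel' (hb 0 (by omega)).le] at e1
      exact e1
    rw [Finset.mem_biUnion]
    refine ⟨(q 0, q l, q 1, P (φ (q 1))), Finset.mem_univ _, ?_⟩
    simp only [B, Finset.mem_filter, Finset.mem_univ, true_and]
    refine ⟨?_, ?_, hb0l, x, s', h2, h1, hu1⟩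
    · intro e
      have := hq (by simp : (0 : ℕ) ∈ {t | t ≤ l}) (by simp; omega : (1 : ℕ) ∈ {t | t ≤ l}) e
      omega
    · intro e
      have := hq (by simp : l ∈ {t | t ≤ l}) (by simp; omega : (1 : ℕ) ∈ {t | t ≤ l}) e
      omega
  have hB : ∀ z ∈ (Finset.univ : Finset (Fin h × Fin h × Fin h × Fin h)),
      (B z).card ≤ n ^ (h - 1) * (n / (M * h) + 1) := by
    rintro ⟨j1, j2, j3, p⟩ -
    have hcard : Fintype.card (({j : Fin h // j ≠ j3} → Fin n) × Fin (n / (M * h) + 1))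
        = n ^ (h - 1) * (n / (M * h) + 1) := by
      simp
    rw [← hcard, ← Finset.card_univ]
    apply Finset.card_le_card_of_injOn (fun φ => (fun j => φ j.1,
      ⟨(φ j3 : ℕ) / (M * h), Nat.lt_succ_of_le (Nat.div_le_div_right (φ j3).2.le)⟩))
    · intro _ _; simp
    · intro φ hφ φ' hφ' he
      simp only [B, Finset.coe_filter, Finset.mem_univ, true_and, Set.mem_ofPred_eq] at hφ hφ'
      obtain ⟨h13, h23, hp, hlt, x, s, e1, e2, e3⟩ := hφ
      obtain ⟨-, -, hp', hlt', x', s', e1', e2', e3'⟩ := hφ'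
      simp only [Prod.mk.injEq, Fin.mk.injEq] at he
      obtain ⟨hoff, hlev⟩ := he
      have hoff' : ∀ j, j ≠ j3 → φ j = φ' j := fun j hj => congrFun hoff ⟨j, hj⟩
      rw [← hoff' j1 h13] at e1' hlt'
      rw [← hoff' j2 h23] at e2' hlt'
      rw [e1] at e1'
      rw [e2] at e2'
      obtain ⟨D, hD⟩ := Nat.exists_eq_add_of_lt hlt
      have hss : s = s' := by
        rw [hD] at e2'
        have : (D + 1) * s = (D + 1) * s' := by nlinarith
        exact Nat.eq_of_mul_eq_mul_left (Nat.succ_pos _) this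
      subst hss
      have hxx : x = x' := by omega
      subst hxx
      have hmod : (φ j3 : ℕ) % M = (φ' j3 : ℕ) % M := by rw [e3, e3']
      have hpart : ((φ j3 : ℕ) / M) % h = ((φ' j3 : ℕ) / M) % h := by
        have := hp.trans hp'.symm
        exact congrArg Fin.val this
      have hj3 : φ j3 = φ' j3 := by
        apply Fin.ext
        rw [← Nat.div_div_eq_div_mul, ← Nat.div_div_eq_div_mul] at hlev
        have hd : (φ j3 : ℕ) / M = (φ' j3 : ℕ) / M := by
          rw [← Nat.mod_add_div ((φ j3 : ℕ) / M) h, ← Nat.mod_add_div ((φ' j3 : ℕ) / M) h,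
            hpart, hlev]
        rw [← Nat.mod_add_div (φ j3 : ℕ) M, ← Nat.mod_add_div (φ' j3 : ℕ) M, hmod, hd]
      funext j
      by_cases hj : j = j3
      · rw [hj, hj3]
      · exact hoff' j hj
  calc _ ≤ (Finset.univ.biUnion B).card := Finset.card_le_card hsub
    _ ≤ (Finset.univ : Finset (Fin h × Fin h × Fin h × Fin h)).card
        * (n ^ (h - 1) * (n / (M * h) + 1)) := Finset.card_biUnion_le_card_mul _ _ _ hB
    _ = _ := by
      congr 1
      simp [Fintype.card_prod]
      ring

theorem far_bG {h n : ℕ} (hn : 0 < n) (H : SimpleGraph (Fin h)) (hh : 0 < h) (a : Fin h → ℕ)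
    (ha : ∀ i, a i < h * h) (hinj : Function.Injective a) (S : Finset ℕ) (m p : ℕ)
    (hm : 0 < m) (hSm : ∀ s ∈ S, s < m) (hp : h * h * p * (h * h * m * h) ≤ n)
    (G' : SimpleGraph (Fin n)) (hG' : G' ∈ InducedFree {⟨h, H⟩} n) :
    m * S.card * p ^ 2 ≤ editDist (bG H hh a S (h * h * m) n) G' := by
  set M := h * h * m with hM
  have hMpos : 0 < M := by positivity
  let T : Finset ((ℕ × ℕ) × (ℕ × ℕ)) := (range m ×ˢ S) ×ˢ (range p ×ˢ range p)
  have hTcard : T.card = m * S.card * p ^ 2 := by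
    simp only [T, Finset.card_product, Finset.card_range]; ring
  have hlin : ∀ (k x s : ℕ) (i : Fin h), x < k → s < k → x + a i * s < h * h * k := by
    intro k x s i hx hs
    have := ha i
    calc x + a i * s < k + a i * s := by omega
      _ ≤ k + a i * k := by gcongr
      _ = (a i + 1) * k := by ring
      _ ≤ h * h * k := Nat.mul_le_mul_right _ this
  let code : ((ℕ × ℕ) × (ℕ × ℕ)) → Fin h → ℕ := fun κ i =>
    (κ.1.1 + a i * κ.1.2) + M * (i + h * (κ.2.1 + a i * κ.2.2))
  have hT : ∀ κ ∈ T, κ.1.1 < m ∧ κ.1.2 ∈ S ∧ κ.2.1 < p ∧ κ.2.2 < p := by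
    intro κ hκ
    simp only [T, Finset.mem_product, Finset.mem_range] at hκ
    tauto
  have hmod : ∀ κ ∈ T, ∀ i, code κ i % M = κ.1.1 + a i * κ.1.2 := by
    intro κ hκ i
    obtain ⟨h1, h2, h3, h4⟩ := hT κ hκ
    simp only [code, Nat.add_mul_mod_self_left]
    exact Nat.mod_eq_of_lt (hlin m _ _ i h1 (hSm _ h2))
  have hdiv : ∀ κ ∈ T, ∀ i : Fin h, code κ i / M = i + h * (κ.2.1 + a i * κ.2.2) := by
    intro κ hκ i
    obtain ⟨h1, h2, h3, h4⟩ := hT κ hκ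
    simp only [code]
    rw [Nat.add_mul_div_left _ _ hMpos, Nat.div_eq_of_lt (hlin m _ _ i h1 (hSm _ h2)), zero_add]
  have hpart : ∀ κ ∈ T, ∀ i : Fin h, partOf h M hh (code κ i) = i := by
    intro κ hκ i
    apply Fin.ext
    simp only [partOf]
    rw [hdiv κ hκ i, Nat.add_mul_mod_self_left, Nat.mod_eq_of_lt i.2]
  have hlev : ∀ κ ∈ T, ∀ i : Fin h, code κ i / M / h = κ.2.1 + a i * κ.2.2 := by
    intro κ hκ i
    rw [hdiv κ hκ i, Nat.add_mul_div_left _ _ hh, Nat.div_eq_of_lt i.2, zero_add]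
  have hcode : ∀ κ ∈ T, ∀ i : Fin h, code κ i < n := by
    intro κ hκ i
    obtain ⟨h1, h2, h3, h4⟩ := hT κ hκ
    have e1 := hlin m _ _ i h1 (hSm _ h2)
    have e2 := hlin p _ _ i h3 h4
    rw [← hM] at e1
    refine lt_of_lt_of_le ?_ hp
    have e3 : (i : ℕ) + h * (κ.2.1 + a i * κ.2.2) < h * (h * h * p) := by
      calc (i : ℕ) + h * (κ.2.1 + a i * κ.2.2) < h + h * (κ.2.1 + a i * κ.2.2) := by
            have := i.2; omega
        _ = h * (κ.2.1 + a i * κ.2.2 + 1) := by ring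
        _ ≤ _ := Nat.mul_le_mul_left _ e2
    calc code κ i < M + M * (i + h * (κ.2.1 + a i * κ.2.2)) := by simp only [code]; omega
      _ = M * (i + h * (κ.2.1 + a i * κ.2.2) + 1) := by ring
      _ ≤ M * (h * (h * h * p)) := Nat.mul_le_mul_left _ e3
      _ = _ := by ring
  have hdet : ∀ i j : Fin h, i ≠ j → ∀ x s x' s' : ℕ, x + a i * s = x' + a i * s' →
      x + a j * s = x' + a j * s' → x = x' ∧ s = s' := by
    have aux : ∀ α β x s x' s' : ℕ, α < β → x + α * s = x' + α * s' →
      x + β * s = x' + β * s' → x = x' ∧ s = s' := by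
      intro α β x s x' s' hlt e1 e2
      obtain ⟨D, rfl⟩ := Nat.exists_eq_add_of_lt hlt
      have : (D + 1) * s = (D + 1) * s' := by nlinarith
      have hss := Nat.eq_of_mul_eq_mul_left (Nat.succ_pos _) this
      subst hss
      exact ⟨by omega, rfl⟩
    intro i j hij x s x' s' e1 e2
    rcases lt_or_gt_of_ne (fun e => hij (hinj e)) with hlt | hlt
    · exact aux _ _ _ _ _ _ hlt e1 e2
    · exact aux _ _ _ _ _ _ hlt e2 e1
  have hadjG : ∀ κ (hκ : κ ∈ T) (i j : Fin h),
      (bG H hh a S M n).Adj ⟨code κ i, hcode κ hκ i⟩ ⟨code κ j, hcode κ hκ j⟩ ↔ H.Adj i j := by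
    intro κ hκ i j
    simp only [bG]
    rw [hpart κ hκ i, hpart κ hκ j, hmod κ hκ i, hmod κ hκ j]
    exact ⟨fun h' => h'.1, fun h' => ⟨h', κ.1.1, κ.1.2, (hT κ hκ).2.1, rfl, rfl⟩⟩
  have hci : ∀ κ ∈ T, ∀ i j : Fin h, code κ i = code κ j → i = j := by
    intro κ hκ i j e
    rw [← hpart κ hκ i, ← hpart κ hκ j, e]
  have hdiff : ∀ κ (hκ : κ ∈ T), ∃ i j : Fin h, i ≠ j ∧
      ¬ ((bG H hh a S M n).Adj ⟨code κ i, hcode κ hκ i⟩ ⟨code κ j, hcode κ hκ j⟩ ↔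
        G'.Adj ⟨code κ i, hcode κ hκ i⟩ ⟨code κ j, hcode κ hκ j⟩) := by
    intro κ hκ
    by_contra hcon
    push Not at hcon
    have hemp : IsEmpty (H ↪g G') := hG' ⟨h, H⟩ rfl
    apply hemp.false
    refine ⟨⟨fun i => ⟨code κ i, hcode κ hκ i⟩, fun i j e => hci κ hκ i j (Fin.mk.inj e)⟩, ?_⟩
    intro i j
    change G'.Adj ⟨code κ i, hcode κ hκ i⟩ ⟨code κ j, hcode κ hκ j⟩ ↔ H.Adj i j
    by_cases hij : i = j
    · subst hij; simp
    · rw [← hcon i j hij, hadjG κ hκ]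
  have hch : ∀ κ, ∃ ij : Fin h × Fin h, ∀ hκ : κ ∈ T, ij.1 ≠ ij.2 ∧
      ¬ ((bG H hh a S M n).Adj ⟨code κ ij.1, hcode κ hκ ij.1⟩ ⟨code κ ij.2, hcode κ hκ ij.2⟩ ↔
        G'.Adj ⟨code κ ij.1, hcode κ hκ ij.1⟩ ⟨code κ ij.2, hcode κ hκ ij.2⟩) := by
    intro κ
    by_cases hκ : κ ∈ T
    · obtain ⟨i, j, h1, h2⟩ := hdiff κ hκ
      exact ⟨(i, j), fun _ => ⟨h1, h2⟩⟩
    · exact ⟨(⟨0, hh⟩, ⟨0, hh⟩), fun h' => absurd h' hκ⟩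
  choose f hf using hch
  rw [← hTcard]
  unfold editDist
  rw [← Set.ncard_coe_finset]
  refine Set.ncard_le_ncard_of_injOn (fun κ => if hκ : κ ∈ T then
      s((⟨code κ (f κ).1, hcode κ hκ _⟩ : Fin n), (⟨code κ (f κ).2, hcode κ hκ _⟩ : Fin n))
      else s((⟨0, hn⟩ : Fin n), ⟨0, hn⟩)) ?_ ?_ ?_
  · intro κ hκ
    have hκ : κ ∈ T := hκ
    simp only [dif_pos hκ, Set.mem_ofPred_eq, SimpleGraph.mem_edgeSet]
    have := (hf κ hκ).2
    tauto
  · intro κ hκ κ' hκ' e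
    have hκ : κ ∈ T := hκ
    have hκ' : κ' ∈ T := hκ'
    simp only [dif_pos hκ, dif_pos hκ', Sym2.eq_iff, Fin.mk.injEq] at e
    have fin : ∀ i j i' j' : Fin h, i ≠ j → code κ i = code κ' i' → code κ j = code κ' j' →
        κ = κ' := by
      intro i j i' j' hij e1 e2
      have hi : i = i' := by rw [← hpart κ hκ i, ← hpart κ' hκ' i', e1]
      have hj : j = j' := by rw [← hpart κ hκ j, ← hpart κ' hκ' j', e2]
      subst hi hj
      have a1 := hmod κ hκ i
      have a2 := hmod κ hκ j
      have b1 := hlev κ hκ i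
      have b2 := hlev κ hκ j
      rw [e1, hmod κ' hκ'] at a1
      rw [e2, hmod κ' hκ'] at a2
      rw [e1, hlev κ' hκ'] at b1
      rw [e2, hlev κ' hκ'] at b2
      obtain ⟨c1, c2⟩ := hdet i j hij _ _ _ _ a1 a2
      obtain ⟨c3, c4⟩ := hdet i j hij _ _ _ _ b1 b2
      exact Prod.ext (Prod.ext c1.symm c2.symm) (Prod.ext c3.symm c4.symm)
    rcases e with ⟨e1, e2⟩ | ⟨e1, e2⟩
    · exact fin _ _ _ _ (hf κ hκ).1 e1 e2
    · exact fin _ _ _ _ (hf κ hκ).1 e1 e2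
  · exact Set.toFinite _

theorem params (A : ℕ) (hA : 3 ≤ A) (C C' : ℝ) (hC : 0 < C) (hC' : 0 < C') :
    ∃ ε₀ c : ℝ, 0 < ε₀ ∧ 0 < c ∧ ∀ ε : ℝ, 0 < ε → ε < ε₀ → ∃ k d : ℕ, 0 < d ∧
      C * ε * (((A * d) ^ k : ℕ) : ℝ) ≤ ((d ^ k : ℕ) : ℝ) / ((k * d ^ 2 : ℕ) : ℝ) ∧
      C' / (((A * d) ^ k : ℕ) : ℝ) ≤ ε ^ (c * Real.log (1 / ε)) := by
  have hAr : (3 : ℝ) ≤ A := by exact_mod_cast hA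
  have hApos : (0 : ℝ) < A := by linarith
  have hlogA : 1 ≤ Real.log A := by
    rw [Real.le_log_iff_exp_le hApos]
    exact (Real.exp_one_lt_three.le).trans hAr
  set c1 : ℝ := 1 / (4 * Real.log A) with hc1
  have hc1pos : 0 < c1 := by positivity
  have hc1log : c1 * Real.log A = 1 / 4 := by rw [hc1]; field_simp
  have hc1le : c1 ≤ 1 / 4 := by nlinarith
  set L0 : ℝ := 16 + 2 / c1 + 64 * C' / c1 + 4 * C with hL0
  refine ⟨Real.exp (-L0), c1 / 64, Real.exp_pos _, by positivity, ?_⟩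
  intro ε hε hεlt
  set L : ℝ := Real.log (1 / ε) with hL
  have hlogε : Real.log ε = -L := by rw [hL, one_div, Real.log_inv]; ring
  have hεL : ε = Real.exp (-L) := by rw [← hlogε, Real.exp_log hε]
  have hLL0 : L0 < L := by
    rw [hεL, Real.exp_lt_exp] at hεlt
    linarith
  have q1 : 0 < 2 / c1 := by positivity
  have q2 : 0 < 64 * C' / c1 := by positivity
  have hL16 : 16 ≤ L := by linarith
  have hL2 : 2 ≤ c1 * L := by
    have : 2 / c1 ≤ L := by linarith
    rw [div_le_iff₀ hc1pos] at this; linarith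
  have hLC' : 64 * C' ≤ c1 * L := by
    have : 64 * C' / c1 ≤ L := by linarith
    rw [div_le_iff₀ hc1pos] at this; linarith
  have hLC : 4 * C ≤ L := by linarith
  set k := ⌊c1 * L⌋₊ with hk
  set d := ⌊Real.exp (L / 8)⌋₊ with hd
  have hkle : (k : ℝ) ≤ c1 * L := Nat.floor_le (by linarith)
  have hkge : c1 * L / 2 ≤ k := by
    have := Nat.lt_floor_add_one (c1 * L)
    rw [← hk] at this
    linarith
  have hkpos : (0 : ℝ) < k := by linarith
  have hdle : (d : ℝ) ≤ Real.exp (L / 8) := Nat.floor_le (Real.exp_pos _).le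
  have hdge : Real.exp (L / 16) ≤ d := by
    have h1 := Nat.lt_floor_add_one (Real.exp (L / 8))
    rw [← hd] at h1
    have h2 : Real.exp (L / 8) = Real.exp (L / 16) * Real.exp (L / 16) := by
      rw [← Real.exp_add]; congr 1; ring
    have h3 := Real.add_one_le_exp (L / 16)
    nlinarith
  have hdpos : (0 : ℝ) < d := lt_of_lt_of_le (Real.exp_pos _) hdge
  refine ⟨k, d, by exact_mod_cast hdpos, ?_, ?_⟩
  · push_cast
    rw [le_div_iff₀ (by positivity), mul_pow]
    have b1 : C ≤ Real.exp (L / 4) := by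
      have := Real.add_one_le_exp (L / 4); linarith
    have b2 : (k : ℝ) ≤ Real.exp (L / 4) := by
      have := Real.add_one_le_exp (L / 4); nlinarith
    have b3 : (d : ℝ) ^ 2 ≤ Real.exp (L / 4) := by
      calc (d : ℝ) ^ 2 ≤ Real.exp (L / 8) ^ 2 := by gcongr
        _ = Real.exp (L / 4) := by rw [← Real.exp_nat_mul]; congr 1; push_cast; ring
    have b4 : (A : ℝ) ^ k ≤ Real.exp (L / 4) := by
      calc (A : ℝ) ^ k = Real.exp (k * Real.log A) := by
            rw [Real.exp_nat_mul, Real.exp_log hApos]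
        _ ≤ Real.exp (L / 4) := by
            rw [Real.exp_le_exp]
            nlinarith
    have b5 : C * ε * A ^ k * (k * d ^ 2) ≤ 1 := by
      calc C * ε * A ^ k * (k * d ^ 2)
          ≤ Real.exp (L / 4) * ε * Real.exp (L / 4) * (Real.exp (L / 4) * Real.exp (L / 4)) := by
            gcongr
        _ = 1 := by
            rw [hεL, ← Real.exp_add, ← Real.exp_add, ← Real.exp_add, ← Real.exp_add,
              ← Real.exp_zero]
            congr 1; ring
    calc C * ε * ((A : ℝ) ^ k * (d : ℝ) ^ k) * ((k : ℝ) * (d : ℝ) ^ 2)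
        = (C * ε * (A : ℝ) ^ k * (k * (d : ℝ) ^ 2)) * (d : ℝ) ^ k := by ring
      _ ≤ 1 * (d : ℝ) ^ k := by gcongr
      _ = (d : ℝ) ^ k := one_mul _
  · have hrpow : ε ^ (c1 / 64 * L) = Real.exp (-(c1 * L * L / 64)) := by
      rw [Real.rpow_def_of_pos hε, hlogε]; congr 1; ring
    rw [hrpow]
    have hm : Real.exp (c1 * L * L / 32) ≤ (((A * d) ^ k : ℕ) : ℝ) := by
      push_cast
      calc Real.exp (c1 * L * L / 32) ≤ Real.exp (k * (L / 16)) := by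
            rw [Real.exp_le_exp]
            have e1 : c1 * L / 2 * (L / 16) ≤ k * (L / 16) :=
              mul_le_mul_of_nonneg_right hkge (by linarith)
            linarith
        _ = Real.exp (L / 16) ^ k := by rw [Real.exp_nat_mul]
        _ ≤ (d : ℝ) ^ k := by gcongr
        _ ≤ (A * d : ℝ) ^ k := by
            apply pow_le_pow_left₀ hdpos.le
            exact le_mul_of_one_le_left hdpos.le (by linarith)
    have hC'e : C' ≤ Real.exp (c1 * L * L / 64) := by
      have e1 := Real.add_one_le_exp (c1 * L * L / 64)
      have e2 : 64 * C' * 1 ≤ c1 * L * L :=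
        mul_le_mul hLC' (by linarith) zero_le_one (by linarith)
      linarith
    rw [div_le_iff₀ (lt_of_lt_of_le (Real.exp_pos _) hm)]
    calc C' ≤ Real.exp (c1 * L * L / 64) := hC'e
      _ = Real.exp (-(c1 * L * L / 64)) * Real.exp (c1 * L * L / 32) := by
          rw [← Real.exp_add]; congr 1; ring
      _ ≤ _ := by gcongr

/-- For every `h ≥ 3` there are `ε₀, c > 0` such that for every `ε ∈ (0, ε₀)`
and every non-bipartite graph `H` on `h` vertices, for all sufficiently large `n` there is a
graph on `n` vertices which is `ε`-far from being induced `H`-free and yet contains at most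
`ε ^ (c · log (1/ε)) · n ^ h` (not necessarily induced) copies of `H`. -/
theorem hard_to_test_non_bipartite (h : ℕ) (hh : 3 ≤ h) :
    ∃ ε₀ c : ℝ, 0 < ε₀ ∧ 0 < c ∧
      ∀ ε : ℝ, 0 < ε → ε < ε₀ →
      ∀ H : SimpleGraph (Fin h), ¬ IsBipGraph H →
      ∃ n₀ : ℕ, ∀ n : ℕ, n₀ ≤ n →
        ∃ G : SimpleGraph (Fin n),
          Far (InducedFree {⟨h, H⟩}) G ε ∧
          (copyCount H G : ℝ) ≤ ε ^ (c * Real.log (1 / ε)) * (n : ℝ) ^ h := by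
  have hh0 : 0 < h := by omega
  have hhr : (0 : ℝ) < h := by exact_mod_cast hh0
  obtain ⟨ε₀, c, hε₀, hc, hpar⟩ := params (h * h) (by nlinarith) (4 * (h : ℝ) ^ 10)
    (2 * (h : ℝ) ^ 4) (by positivity) (by positivity)
  refine ⟨ε₀, c, hε₀, hc, ?_⟩
  intro ε hε hεlt H hH
  obtain ⟨k, d, hd, hp1, hp2⟩ := hpar ε hε hεlt
  obtain ⟨a, l, hainj, ha, hl, hlab⟩ := labelling_exists H hH
  obtain ⟨S, hSm, hS, hScard⟩ := behrend_set (h * h) k d (by positivity)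
  set m := (h * h * d) ^ k with hm
  have hmpos : 0 < m := by positivity
  have hmr : (0 : ℝ) < m := by exact_mod_cast hmpos
  set Q := h * h * (h * h * m * h) with hQ
  have hQpos : 0 < Q := by positivity
  refine ⟨Q, fun n hn => ?_⟩
  have hnpos : 0 < n := by omega
  have hnr : (0 : ℝ) < n := by exact_mod_cast hnpos
  refine ⟨bG H hh0 a S (h * h * m) n, ?_, ?_⟩
  · intro G' hG'
    have hfar := far_bG hnpos H hh0 a ha hainj S m (n / Q) hmpos hSm (by
      calc h * h * (n / Q) * (h * h * m * h) = Q * (n / Q) := by rw [hQ]; ring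
        _ ≤ n := Nat.mul_div_le _ _) G' hG'
    have hfar' : (m : ℝ) * S.card * ((n / Q : ℕ) : ℝ) ^ 2
        ≤ (editDist (bG H hh0 a S (h * h * m) n) G' : ℝ) := by exact_mod_cast hfar
    refine le_trans ?_ hfar'
    have hn2 : (n : ℝ) ≤ 2 * Q * ((n / Q : ℕ) : ℝ) := by
      have h1 : 1 ≤ n / Q := (Nat.one_le_div_iff hQpos).2 hn
      have h2 := Nat.lt_mul_div_succ n hQpos
      have : n ≤ 2 * Q * (n / Q) := by nlinarith
      exact_mod_cast this
    have hS' : 4 * (h : ℝ) ^ 10 * ε * m ≤ S.card := hp1.trans hScard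
    have hQr : (Q : ℝ) = h ^ 5 * m := by rw [hQ]; push_cast; ring
    calc ε * (n : ℝ) ^ 2 ≤ ε * (2 * Q * ((n / Q : ℕ) : ℝ)) ^ 2 := by gcongr
      _ = m * (4 * (h : ℝ) ^ 10 * ε * m) * ((n / Q : ℕ) : ℝ) ^ 2 := by rw [hQr]; ring
      _ ≤ m * S.card * ((n / Q : ℕ) : ℝ) ^ 2 := by gcongr
  · have hcount := (copyCount_le_homs hnpos H (bG H hh0 a S (h * h * m) n)).trans
      (homs_le H hh0 a S (h * h * m) l ha hl hlab hS)
    have hcr : (copyCount H (bG H hh0 a S (h * h * m) n) : ℝ)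
        ≤ (h : ℝ) ^ 4 * ((n : ℝ) ^ (h - 1) * (((n / (h * h * m * h) : ℕ) : ℝ) + 1)) := by
      exact_mod_cast hcount
    refine hcr.trans ?_
    have hb : ((n / (h * h * m * h) : ℕ) : ℝ) + 1 ≤ 2 * n / m := by
      have h0 : m ≤ h * h * m * h := by
        have : 0 < h * h * h := by positivity
        nlinarith
      have h0' : h * h * m * h ≤ Q := by
        rw [hQ]
        exact Nat.le_mul_of_pos_left _ (by positivity)
      have h1 : n / (h * h * m * h) ≤ n / m := Nat.div_le_div_left h0 hmpos
      have h2 : ((n / (h * h * m * h) : ℕ) : ℝ) ≤ (n : ℝ) / m :=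
        le_trans (by exact_mod_cast h1) Nat.cast_div_le
      have h3 : (1 : ℝ) ≤ n / m := by
        rw [le_div_iff₀ hmr, one_mul]
        exact_mod_cast h0.trans (h0'.trans hn)
      calc _ ≤ (n : ℝ) / m + n / m := add_le_add h2 h3
        _ = _ := by ring
    have hpow : (n : ℝ) ^ h = n ^ (h - 1) * n := by
      rw [← pow_succ, Nat.sub_add_cancel (by omega)]
    calc (h : ℝ) ^ 4 * ((n : ℝ) ^ (h - 1) * (((n / (h * h * m * h) : ℕ) : ℝ) + 1))
        ≤ (h : ℝ) ^ 4 * ((n : ℝ) ^ (h - 1) * (2 * n / m)) := by gcongr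
      _ = 2 * (h : ℝ) ^ 4 / m * (n : ℝ) ^ h := by rw [hpow]; ring
      _ ≤ _ := by gcongr

end
end

section
/- Let F be a family of graphs such that (1) F contains a bipartite graph, a co-bipartite graph and a split graph, and (2) the property P*_F of being induced F-free has the blowup quality. Then P*_F is easily testable. -/
open scoped Classical
open Finset

noncomputable section

/-- `G` is a `g`-blowup of `F`: the vertices of `G` can be partitioned into parts `P_i`
(`i ∈ V(F)`, the fibres of `φ`) such that the bipartite graph between `P_i` and `P_j` is
complete if `(i,j) ∈ E(F)` and empty otherwise, and `P_i` is a clique if `g i = true` and an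
independent set if `g i = false`. -/
def IsGBlowup {p : ℕ} (F : SimpleGraph (Fin p)) (g : Fin p → Bool) {V : Type*}
    (G : SimpleGraph V) : Prop :=
  ∃ φ : V → Fin p, Function.Surjective φ ∧ ∀ u v : V, u ≠ v →
    (G.Adj u v ↔ if φ u = φ v then g (φ u) = true else F.Adj (φ u) (φ v))

/-- A graph property has the blowup quality if for every graph `F` satisfying it there
is `g : V(F) → {0,1}` such that every `g`-blowup of `F` satisfies it. -/
def BlowupQuality (P : ∀ n : ℕ, Set (SimpleGraph (Fin n))) : Prop :=
  ∀ p : ℕ, ∀ F : SimpleGraph (Fin p), F ∈ P p →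
    ∃ g : Fin p → Bool, ∀ n : ℕ, ∀ G : SimpleGraph (Fin n), IsGBlowup F g G → G ∈ P n



theorem ramsey_two (a b : ℕ) : ∃ N : ℕ, ∀ (V : Type) (G : SimpleGraph V) (S : Finset V), N ≤ S.card →
    (∃ T ⊆ S, T.card = a ∧ ∀ u ∈ T, ∀ v ∈ T, u ≠ v → G.Adj u v) ∨
    (∃ T ⊆ S, T.card = b ∧ ∀ u ∈ T, ∀ v ∈ T, u ≠ v → ¬ G.Adj u v) := by
  induction a generalizing b with
  | zero => exact ⟨0, fun V G S _ => Or.inl ⟨∅, by simp⟩⟩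
  | succ a iha =>
    induction b with
    | zero => exact ⟨0, fun V G S _ => Or.inr ⟨∅, by simp⟩⟩
    | succ b ihb =>
      obtain ⟨N1, h1⟩ := iha (b + 1)
      obtain ⟨N2, h2⟩ := ihb
      refine ⟨N1 + N2 + 1, fun V G S hS => ?_⟩
      have hne : S.Nonempty := by rw [← Finset.card_pos]; omega
      obtain ⟨v, hv⟩ := hne
      have hc := Finset.card_filter_add_card_filter_not (s := S.erase v) (fun u => G.Adj v u)
      rw [Finset.card_erase_of_mem hv] at hc
      by_cases hN : N1 ≤ ((S.erase v).filter (fun u => G.Adj v u)).card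
      · rcases h1 V G _ hN with ⟨T, hTS, hT, hcl⟩ | ⟨T, hTS, hT, hcl⟩
        · left
          refine ⟨insert v T, ?_, ?_, ?_⟩
          · intro u hu
            rcases Finset.mem_insert.1 hu with rfl | hu
            · exact hv
            · have := hTS hu
              simp at this
              tauto
          · rw [Finset.card_insert_of_notMem, hT]
            intro hvT
            have := hTS hvT
            simp at this
          · intro u hu w hw huw
            have key : ∀ u ∈ T, G.Adj v u := fun u hu => by
              have := hTS hu
              simp at this
              tauto
            rcases Finset.mem_insert.1 hu with hu1 | hu1 <;> rcases Finset.mem_insert.1 hw with hw1 | hw1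
            · exact absurd (hu1.trans hw1.symm) huw
            · exact hu1 ▸ key _ hw1
            · exact hw1 ▸ (key _ hu1).symm
            · exact hcl u hu1 w hw1 huw
        · right
          refine ⟨T, hTS.trans ((Finset.filter_subset _ _).trans (Finset.erase_subset _ _)), hT, hcl⟩
      · have hN2 : N2 ≤ ((S.erase v).filter (fun u => ¬ G.Adj v u)).card := by omega
        rcases h2 V G _ hN2 with ⟨T, hTS, hT, hcl⟩ | ⟨T, hTS, hT, hcl⟩
        · left
          refine ⟨T, hTS.trans ((Finset.filter_subset _ _).trans (Finset.erase_subset _ _)), hT, hcl⟩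
        · right
          refine ⟨insert v T, ?_, ?_, ?_⟩
          · intro u hu
            rcases Finset.mem_insert.1 hu with rfl | hu
            · exact hv
            · have := hTS hu
              simp at this
              tauto
          · rw [Finset.card_insert_of_notMem, hT]
            intro hvT
            have := hTS hvT
            simp at this
          · intro u hu w hw huw
            have key : ∀ u ∈ T, ¬ G.Adj v u := fun u hu => by
              have := hTS hu
              simp at this
              tauto
            rcases Finset.mem_insert.1 hu with hu1 | hu1 <;> rcases Finset.mem_insert.1 hw with hw1 | hw1
            · exact absurd (hu1.trans hw1.symm) huw
            · exact hu1 ▸ key _ hw1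
            · exact fun h => (key _ hu1) (hw1 ▸ h.symm)
            · exact hcl u hu1 w hw1 huw

theorem ramsey_hom (m : ℕ) : ∃ N : ℕ, ∀ (V : Type) (G : SimpleGraph V) (S : Finset V), N ≤ S.card →
    ∃ T ⊆ S, T.card = m ∧ ∃ g : Prop, ∀ u ∈ T, ∀ v ∈ T, u ≠ v → (G.Adj u v ↔ g) := by
  obtain ⟨N, hN⟩ := ramsey_two m m
  refine ⟨N, fun V G S hS => ?_⟩
  rcases hN V G S hS with ⟨T, h1, h2, h3⟩ | ⟨T, h1, h2, h3⟩
  · exact ⟨T, h1, h2, True, fun u hu v hv huv => by simpa using h3 u hu v hv huv⟩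
  · exact ⟨T, h1, h2, False, fun u hu v hv huv => by simpa using h3 u hu v hv huv⟩

theorem hom_embed {V : Type} (G : SimpleGraph V) {p : ℕ} (F : SimpleGraph (Fin p)) (A : Set (Fin p))
    (gx gy : Prop)
    (hA : ∀ u ∈ A, ∀ v ∈ A, u ≠ v → (F.Adj u v ↔ gx))
    (hB : ∀ u ∉ A, ∀ v ∉ A, u ≠ v → (F.Adj u v ↔ gy))
    {t : ℕ} (x : Fin t → V) (y : Finset (Fin t) → V)
    (hxy : ∀ i S, G.Adj (x i) (y S) ↔ i ∈ S)
    (hy : ∀ S S', y S ≠ y S' → (G.Adj (y S) (y S') ↔ gy))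
    (j : Fin p ⊕ Fin p ⊕ Unit → Fin t) (hj : Function.Injective j)
    (hx : ∀ i i', i ≠ i' → (G.Adj (x (j i)) (x (j i')) ↔ gx)) :
    ∃ e : F ↪g G, Set.range e ⊆ Set.range x ∪ Set.range y := by
  have xinj : Function.Injective x := by
    intro a b hab
    have := hxy a {a}
    rw [hab, hxy] at this
    simpa [eq_comm] using this
  have yinj : Function.Injective y := by
    intro S S' h
    ext i
    rw [← hxy, ← hxy, h]
  let Sb : Fin p → Finset (Fin t) := fun b =>
    Finset.univ.filter (fun i => (∃ a ∈ A, F.Adj a b ∧ i = j (.inl a)) ∨ i = j (.inr (.inl b)))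
  have mem1 : ∀ a b, a ∈ A → (j (.inl a) ∈ Sb b ↔ F.Adj a b) := by
    intro a b ha
    simp only [Sb, Finset.mem_filter, Finset.mem_univ, true_and]
    constructor
    · rintro (⟨a', _, h, h'⟩ | h)
      · have := hj h'
        simp at this
        rwa [this]
      · have := hj h
        simp at this
    · intro h
      exact Or.inl ⟨a, ha, h, rfl⟩
  have mem2 : ∀ b b', (j (.inr (.inl b)) ∈ Sb b' ↔ b = b') := by
    intro b b'
    simp only [Sb, Finset.mem_filter, Finset.mem_univ, true_and]
    constructor
    · rintro (⟨a', _, h, h'⟩ | h)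
      · have := hj h'
        simp at this
      · have := hj h
        simpa using this
    · rintro rfl
      exact Or.inr rfl
  have mem3 : ∀ b, (j (.inr (.inr ())) ∉ Sb b) := by
    intro b
    simp only [Sb, Finset.mem_filter, Finset.mem_univ, true_and]
    rintro (⟨a', _, h, h'⟩ | h)
    · have := hj h'
      simp at this
    · have := hj h
      simp at this
  have sinj : Function.Injective Sb := by
    intro b b' h
    have := (mem2 b b).2 rfl
    rw [h] at this
    exact (mem2 _ _).1 this
  have disj : ∀ a b, x (j (.inl a)) ≠ y (Sb b) := by
    intro a b h
    have h1 := (hxy (j (.inr (.inl b))) (Sb b)).2 ((mem2 b b).2 rfl)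
    rw [← h, hx _ _ (by simp)] at h1
    have h2 := mem3 b
    rw [← hxy, ← h, hx _ _ (by simp)] at h2
    exact h2 h1
  let e : Fin p → V := fun v => if v ∈ A then x (j (.inl v)) else y (Sb v)
  have einj : Function.Injective e := by
    intro u v h
    by_cases hu : u ∈ A <;> by_cases hv : v ∈ A <;> simp only [e, hu, hv, if_true, if_false] at h
    · simpa using hj (xinj h)
    · exact absurd h (disj _ _)
    · exact absurd h.symm (disj _ _)
    · exact sinj (yinj h)
  refine ⟨⟨⟨e, einj⟩, ?_⟩, ?_⟩
  · intro u v
    simp only [Function.Embedding.coeFn_mk]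
    by_cases huv : u = v
    · subst huv; simp
    by_cases hu : u ∈ A <;> by_cases hv : v ∈ A <;> simp only [e, hu, hv, if_true, if_false]
    · rw [hx _ _ (by simpa using huv), hA u hu v hv huv]
    · rw [hxy, mem1 _ _ hu]
    · rw [G.adj_comm, hxy, mem1 _ _ hv, F.adj_comm]
    · rw [hy _ _ (fun h => huv (sinj (yinj h))), hB u hu v hv huv]
  · rintro _ ⟨v, rfl⟩
    change e v ∈ _
    by_cases hv : v ∈ A <;> simp [e, hv]

def BadSet {n : ℕ} (𝓕 : Set (Σ k : ℕ, SimpleGraph (Fin k))) (G : SimpleGraph (Fin n)) (X : Set (Fin n)) : Prop :=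
  ∃ p ∈ 𝓕, ∃ e : p.2 ↪g G, Set.range e ⊆ X

theorem shatter_bad
    (𝓕 : Set (Σ k : ℕ, SimpleGraph (Fin k)))
    (hbip : ∃ p ∈ 𝓕, IsBipGraph p.2)
    (hcobip : ∃ p ∈ 𝓕, IsCoBipGraph p.2)
    (hsplit : ∃ p ∈ 𝓕, IsSplitGraph p.2) :
    ∃ D : ℕ, ∀ (n : ℕ) (G : SimpleGraph (Fin n)) (X : Set (Fin n)) (Y : Finset (Fin n)),
      D ≤ Y.card → (∀ B ⊆ Y, ∃ x ∈ X, ∀ y ∈ Y, (G.Adj x y ↔ y ∈ B)) →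
      BadSet 𝓕 G (X ∪ Y) := by
  obtain ⟨⟨p1, F1⟩, hF1, A1, h1, h1'⟩ := hbip
  obtain ⟨⟨p2, F2⟩, hF2, A2, h2, h2'⟩ := hcobip
  obtain ⟨⟨p3, F3⟩, hF3, A3, h3, h3'⟩ := hsplit
  let P := p1 + p2 + p3
  obtain ⟨t, ht⟩ := ramsey_hom (P + P + 1)
  obtain ⟨D, hD⟩ := ramsey_hom (2 ^ t)
  refine ⟨D, fun n G X Y hY hsh => ?_⟩
  obtain ⟨Y1, hY1, hc, gy, hgy⟩ := hD _ G Y hY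
  have heq : Nonempty (Finset (Fin t) ≃ Y1) := by
    rw [← Fintype.card_eq]; simp [hc]
  obtain ⟨y⟩ := heq
  have : ∀ i : Fin t, ∃ x ∈ X, ∀ S, G.Adj x (y S) ↔ i ∈ S := by
    intro i
    obtain ⟨x, hx, hx'⟩ := hsh ((Finset.univ.filter (fun S : Finset (Fin t) => i ∈ S)).image (fun S => (y S : Fin n))) (by
      intro v hv
      simp only [Finset.mem_image] at hv
      obtain ⟨S, _, rfl⟩ := hv
      exact hY1 (y S).2)
    refine ⟨x, hx, fun S => ?_⟩
    rw [hx' _ (hY1 (y S).2)]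
    simp only [Finset.mem_image, Finset.mem_filter, Finset.mem_univ, true_and]
    constructor
    · rintro ⟨S', h, h'⟩
      have := y.injective (Subtype.ext h')
      rwa [← this]
    · intro h
      exact ⟨S, h, rfl⟩
  choose x hxX hxy using this
  have xinj : Function.Injective x := by
    intro a b hab
    have := hxy a {a}
    rw [hab, hxy] at this
    simpa [eq_comm] using this
  obtain ⟨I, -, hI, gx, hgx⟩ := ht _ (G.comap x) Finset.univ (by simp)
  have hex : ∀ p ≤ P, ∃ j : Fin p ⊕ Fin p ⊕ Unit → Fin t, Function.Injective j ∧ ∀ i, j i ∈ I := by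
    intro p hp
    have : Fintype.card (Fin p ⊕ Fin p ⊕ Unit) ≤ Fintype.card I := by
      simp [hI]; omega
    obtain ⟨f⟩ := Function.Embedding.nonempty_of_card_le this
    exact ⟨fun i => f i, fun a b h => f.injective (Subtype.ext h), fun i => (f i).2⟩
  have main : ∀ p ≤ P, ∀ F : SimpleGraph (Fin p), ∀ A : Set (Fin p), 
      (∀ u ∈ A, ∀ v ∈ A, u ≠ v → (F.Adj u v ↔ gx)) →
      (∀ u ∉ A, ∀ v ∉ A, u ≠ v → (F.Adj u v ↔ gy)) → 
      ∃ e : F ↪g G, Set.range e ⊆ X ∪ Y := by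
    intro p hp F A hA hB
    obtain ⟨j, hj, hj'⟩ := hex p hp
    obtain ⟨e, he⟩ := hom_embed G F A gx gy hA hB x (fun S => y S) (fun i S => hxy i S)
      (fun S S' h => hgy _ (y S).2 _ (y S').2 h) j hj
      (fun i i' h => hgx _ (hj' i) _ (hj' i') (fun h' => h (hj h')))
    refine ⟨e, he.trans (Set.union_subset_union ?_ ?_)⟩
    · rintro _ ⟨i, rfl⟩; exact hxX i
    · rintro _ ⟨S, rfl⟩; exact hY1 (y S).2
  by_cases hx : gx <;> by_cases hy : gy
  · obtain ⟨e, he⟩ := main p2 (by omega) F2 A2 (fun u hu v hv h => by simpa [hx] using h2 u hu v hv h)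
      (fun u hu v hv h => by simpa [hy] using h2' u hu v hv h)
    exact ⟨_, hF2, e, he⟩
  · obtain ⟨e, he⟩ := main p3 (by omega) F3 A3 (fun u hu v hv h => by simpa [hx] using h3 u hu v hv h)
      (fun u hu v hv h => by simpa [hy] using h3' u hu v hv)
    exact ⟨_, hF3, e, he⟩
  · obtain ⟨e, he⟩ := main p3 (by omega) F3 A3ᶜ (fun u hu v hv h => by simpa [hx] using h3' u hu v hv)
      (fun u hu v hv h => by simpa [hy] using h3 u (by simpa using hu) v (by simpa using hv) h)
    exact ⟨_, hF3, e, he⟩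
  · obtain ⟨e, he⟩ := main p1 (by omega) F1 A1 (fun u hu v hv h => by simpa [hx] using h1 u hu v hv)
      (fun u hu v hv h => by simpa [hy] using h1' u hu v hv)
    exact ⟨_, hF1, e, he⟩


theorem exists_perm_image {n : ℕ} (E Q : Finset (Fin n)) (h : E.card = Q.card) :
    ∃ τ : Equiv.Perm (Fin n), E.image τ = Q := by
  have heq : Nonempty ({x // x ∈ E} ≃ {x // x ∈ Q}) := by
    rw [← Fintype.card_eq]; simp [h]
  obtain ⟨e⟩ := heq
  refine ⟨e.extendSubtype, ?_⟩
  apply Finset.eq_of_subset_of_card_le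
  · intro x hx
    simp only [Finset.mem_image] at hx
    obtain ⟨a, ha, rfl⟩ := hx
    exact e.extendSubtype_mem a ha
  · rw [Finset.card_image_of_injective _ (Equiv.injective _), h]

theorem perm_count {n q : ℕ} (E : Finset (Fin n)) (hE : E.card = q) (B : Finset (Fin n) → Prop) :
    ((univ : Finset (Equiv.Perm (Fin n))).filter (fun σ : Equiv.Perm (Fin n) => B (E.image σ))).card * n.choose q
      = (((univ : Finset (Fin n)).powersetCard q).filter B).card *
        (univ : Finset (Equiv.Perm (Fin n))).card := by
  have hmaps : ∀ σ ∈ (univ : Finset (Equiv.Perm (Fin n))), E.image σ ∈ (univ : Finset (Fin n)).powersetCard q := by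
    intro σ _
    rw [Finset.mem_powersetCard_univ, Finset.card_image_of_injective _ (Equiv.injective _), hE]
  let N := ((univ : Finset (Equiv.Perm (Fin n))).filter (fun σ : Equiv.Perm (Fin n) => E.image σ = E)).card
  have hN : ∀ Q ∈ (univ : Finset (Fin n)).powersetCard q,
      ((univ : Finset (Equiv.Perm (Fin n))).filter (fun σ : Equiv.Perm (Fin n) => E.image σ = Q)).card = N := by
    intro Q hQ
    rw [Finset.mem_powersetCard_univ] at hQ
    obtain ⟨τ, hτ⟩ := exists_perm_image E Q (hE.trans hQ.symm)
    symm
    apply Finset.card_bij (fun σ _ => τ * σ)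
    · intro σ hσ
      simp only [Finset.mem_filter, Finset.mem_univ, true_and] at hσ ⊢
      rw [Equiv.Perm.coe_mul, ← Finset.image_image, hσ, hτ]
    · intro a _ b _ h
      exact mul_left_cancel h
    · intro σ hσ
      simp only [Finset.mem_filter, Finset.mem_univ, true_and] at hσ
      refine ⟨τ⁻¹ * σ, ?_, by simp⟩
      simp only [Finset.mem_filter, Finset.mem_univ, true_and]
      rw [Equiv.Perm.coe_mul, ← Finset.image_image, hσ, ← hτ, Finset.image_image,
        ← Equiv.Perm.coe_mul, inv_mul_cancel]
      simp
  have h1 : (univ : Finset (Equiv.Perm (Fin n))).card = n.choose q * N := by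
    rw [Finset.card_eq_sum_card_fiberwise hmaps, Finset.sum_congr rfl hN]
    simp
  have h2 : ((univ : Finset (Equiv.Perm (Fin n))).filter (fun σ : Equiv.Perm (Fin n) => B (E.image σ))).card
      = (((univ : Finset (Fin n)).powersetCard q).filter B).card * N := by
    rw [Finset.card_eq_sum_card_fiberwise (f := fun σ : Equiv.Perm (Fin n) => E.image σ)
      (t := ((univ : Finset (Fin n)).powersetCard q).filter B)]
    · rw [Finset.sum_const_nat (m := N)]
      intro Q hQ
      rw [Finset.mem_filter] at hQ
      rw [← hN Q hQ.1]
      congr 1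
      ext σ
      simp only [Finset.mem_filter, Finset.mem_univ, true_and]
      constructor
      · exact fun h => h.2
      · intro h
        exact ⟨h ▸ hQ.2, h⟩
    · intro σ hσ
      have hσ' : B (E.image σ) := by simpa using hσ
      exact Finset.mem_coe.2 (Finset.mem_filter.2 ⟨hmaps σ (Finset.mem_univ _), hσ'⟩)
  rw [h1, h2]
  ring

theorem transfer {n q : ℕ} (hq : q ≤ n) {ι : Type} [Fintype ι] (hι : Fintype.card ι ≤ q)
    (B : Set (Fin n) → Prop) (mono : ∀ X Y, X ⊆ Y → B X → B Y) :
    ((univ : Finset (ι → Fin n)).filter (fun h => B (Set.range h))).card * n.choose q ≤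
    (((univ : Finset (Fin n)).powersetCard q).filter (fun Q : Finset (Fin n) => B (Q : Set (Fin n)))).card *
      (univ : Finset (ι → Fin n)).card := by
  have hex : ∀ h : ι → Fin n, ∃ E : Finset (Fin n), E.card = q ∧ Set.range h ⊆ E := by
    intro h
    obtain ⟨E, h1, h2⟩ := Finset.exists_superset_card_eq (s := univ.image h) (n := q)
      (Finset.card_image_le.trans hι) (by simpa using hq)
    refine ⟨E, h2, ?_⟩
    rintro _ ⟨i, rfl⟩
    exact h1 (Finset.mem_image_of_mem _ (Finset.mem_univ _))
  choose E hE1 hE2 using hex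
  have hpos : 0 < (univ : Finset (Equiv.Perm (Fin n))).card := Finset.card_pos.2 ⟨1, Finset.mem_univ _⟩
  have hstep : ∀ σ : Equiv.Perm (Fin n),
      ((univ : Finset (ι → Fin n)).filter (fun h => B (Set.range h))).card ≤
      ((univ : Finset (ι → Fin n)).filter (fun h => B (((E h).image σ : Finset (Fin n)) : Set (Fin n)))).card := by
    intro σ
    apply Finset.card_le_card_of_injOn (fun h => fun i => σ⁻¹ (h i))
    · intro h hh
      have hh' : B (Set.range h) := by simpa using hh
      simp only [Finset.coe_filter, Finset.mem_univ, true_and, Set.mem_ofPred_eq]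
      refine mono _ _ ?_ hh'
      rintro _ ⟨i, rfl⟩
      rw [Finset.mem_coe, Finset.mem_image]
      exact ⟨σ⁻¹ (h i), hE2 _ ⟨i, rfl⟩, by simp⟩
    · intro a _ b _ hab
      funext i
      have := congrFun hab i
      exact σ⁻¹.injective this
  have hsum := Finset.sum_le_sum (fun σ (_ : σ ∈ (univ : Finset (Equiv.Perm (Fin n)))) => hstep σ)
  rw [Finset.sum_const, smul_eq_mul] at hsum
  simp only [Finset.card_filter] at hsum
  rw [Finset.sum_comm] at hsum
  simp only [← Finset.card_filter] at hsum
  have h3 := Nat.mul_le_mul_right (n.choose q) hsum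
  rw [Finset.sum_mul, Finset.sum_congr rfl (fun h _ => perm_count (E h) (hE1 h) (fun Q : Finset (Fin n) => B (Q : Set (Fin n)))),
    Finset.sum_const, smul_eq_mul] at h3
  refine Nat.le_of_mul_le_mul_left ?_ hpos
  calc _ = _ := by rw [mul_assoc]
    _ ≤ _ := h3
    _ = _ := by ring


theorem bern (a m q : ℕ) : a ^ q * (a + m + q * m) ≤ (a + m) ^ (q + 1) := by
  induction q with
  | zero => simp
  | succ q ih =>
    calc a ^ (q + 1) * (a + m + (q + 1) * m) = a ^ q * (a * (a + m + (q + 1) * m)) := by ring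
      _ ≤ a ^ q * ((a + m) * (a + m + q * m)) := by
          apply Nat.mul_le_mul_left
          nlinarith [Nat.zero_le (m * m), Nat.zero_le (q * (m * m))]
      _ = (a ^ q * (a + m + q * m)) * (a + m) := by ring
      _ ≤ (a + m) ^ (q + 1) * (a + m) := Nat.mul_le_mul_right _ ih
      _ = _ := by ring

def symd {n : ℕ} (G : SimpleGraph (Fin n)) (u v : Fin n) : ℕ :=
  ((univ : Finset (Fin n)).filter (fun w => ¬ (G.Adj u w ↔ G.Adj v w))).card

def rep {n : ℕ} {ι L : Type} [Nonempty ι] (c : Fin n → L) (f : ι → Fin n) (v : Fin n) : ι :=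
  Classical.epsilon (fun i => c (f i) = c v)

def phi {n : ℕ} {ι L : Type} [Nonempty ι] (c : Fin n → L) (f : ι → Fin n) (v : Fin n) : Fin n :=
  f (rep c f v)

def Hit {n : ℕ} {ι L : Type} (c : Fin n → L) (f : ι → Fin n) (v : Fin n) : Prop :=
  ∃ i, c (f i) = c v

theorem phi_spec {n : ℕ} {ι L : Type} [Nonempty ι] (c : Fin n → L) (f : ι → Fin n) (v : Fin n)
    (h : Hit c f v) : c (phi c f v) = c v :=
  Classical.epsilon_spec (p := fun i => c (f i) = c v) h

theorem rep_congr {n : ℕ} {ι L : Type} [Nonempty ι] (c : Fin n → L) (f f' : ι → Fin n) (v v' : Fin n)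
    (h : ∀ i, c (f' i) = c (f i)) (hv : c v' = c v) : rep c f' v' = rep c f v := by
  unfold rep
  simp only [h, hv]

theorem swap_count {n : ℕ} (G : SimpleGraph (Fin n)) {ι L : Type} [Nonempty ι] [Fintype ι]
    (c : Fin n → L) (Ex : Finset (Fin n)) :
    ((univ : Finset ((ι → Fin n) × Fin n × Fin n)).filter (fun x => Hit c x.1 x.2.1 ∧ Hit c x.1 x.2.2 ∧
      c x.2.1 ≠ c x.2.2 ∧ x.2.1 ∉ Ex ∧
      ¬ (G.Adj x.2.1 (phi c x.1 x.2.2) ↔ G.Adj (phi c x.1 x.2.1) (phi c x.1 x.2.2)))).card ≤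
    ((univ : Finset ((ι → Fin n) × Fin n × Fin n)).filter (fun x => Hit c x.1 x.2.1 ∧ x.2.1 ∉ Ex ∧
      ¬ (G.Adj x.2.1 x.2.2 ↔ G.Adj (phi c x.1 x.2.1) x.2.2))).card := by
  let Ψ : (ι → Fin n) × Fin n × Fin n → (ι → Fin n) × Fin n × Fin n := fun x =>
    (Function.update x.1 (rep c x.1 x.2.2) x.2.2, x.2.1, phi c x.1 x.2.2)
  have hc : ∀ (f : ι → Fin n) (v : Fin n), Hit c f v → ∀ i,
      c (Function.update f (rep c f v) v i) = c (f i) := by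
    intro f v h i
    by_cases hi : i = rep c f v
    · subst hi
      rw [Function.update_self]
      exact (phi_spec c f v h).symm
    · rw [Function.update_of_ne hi]
  apply Finset.card_le_card_of_injOn Ψ
  · rintro ⟨f, u, v⟩ hx
    simp only [Finset.coe_filter, Finset.mem_univ, true_and, Set.mem_ofPred_eq] at hx ⊢
    obtain ⟨hu, hv, huv, hE, hG⟩ := hx
    have hr : rep c (Function.update f (rep c f v) v) u = rep c f u :=
      rep_congr c _ _ _ _ (hc f v hv) rfl
    have hne : rep c f u ≠ rep c f v := by
      intro h
      have h1 := phi_spec c f u hu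
      have h2 := phi_spec c f v hv
      unfold phi at h1 h2
      rw [h] at h1
      exact huv (h1.symm.trans h2)
    have hp : phi c (Function.update f (rep c f v) v) u = phi c f u := by
      unfold phi
      rw [hr, Function.update_of_ne hne]
    refine ⟨?_, hE, ?_⟩
    · obtain ⟨i, hi⟩ := hu
      exact ⟨i, (hc f v hv i).trans hi⟩
    · simp only [Ψ]
      rw [hp]
      exact hG
  · apply Set.LeftInvOn.injOn (f₁' := Ψ)
    rintro ⟨f, u, v⟩ hx
    simp only [Finset.coe_filter, Finset.mem_univ, true_and, Set.mem_ofPred_eq] at hx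
    obtain ⟨hu, hv, huv, hE, hG⟩ := hx
    have hr : rep c (Function.update f (rep c f v) v) (phi c f v) = rep c f v :=
      rep_congr c _ _ _ _ (hc f v hv) (phi_spec c f v hv)
    simp only [Ψ, hr]
    unfold phi
    rw [Function.update_idem]
    rw [Function.update_eq_self]
    have hr' : rep c (Function.update f (rep c f v) v) (f (rep c f v)) = rep c f v := hr
    rw [hr', Function.update_self]

theorem unhit_count {n : ℕ} {ι L : Type} [Fintype ι] (c : Fin n → L) :
    Fintype.card ι * ((univ : Finset ((ι → Fin n) × Fin n)).filter (fun x => ¬ Hit c x.1 x.2)).card ≤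
      (univ.image c).card * (n * n ^ Fintype.card ι) := by
  set q := Fintype.card ι
  have h1 : ((univ : Finset ((ι → Fin n) × Fin n)).filter (fun x => ¬ Hit c x.1 x.2)).card
      = ∑ v : Fin n, ((univ : Finset (Fin n)).filter (fun u => c u ≠ c v)).card ^ q := by
    rw [Finset.card_filter, ← Finset.univ_product_univ, Finset.sum_product_right]
    apply Finset.sum_congr rfl
    intro v _
    rw [← Finset.card_filter]
    have : (univ : Finset (ι → Fin n)).filter (fun f => ¬ Hit c f v) =
        Fintype.piFinset (fun _ => (univ : Finset (Fin n)).filter (fun u => c u ≠ c v)) := by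
      ext f
      simp [Hit, Fintype.mem_piFinset]
    rw [this, Fintype.card_piFinset, Finset.prod_const, Finset.card_univ]
  rw [h1, ← Finset.sum_fiberwise_of_maps_to (s := (univ : Finset (Fin n))) (t := univ.image c) (g := c)
    (fun v _ => Finset.mem_image_of_mem _ (Finset.mem_univ _)), Finset.mul_sum, ← smul_eq_mul (univ.image c).card]
  apply Finset.sum_le_card_nsmul
  intro l _
  have h2 : ∑ v ∈ (univ : Finset (Fin n)).filter (fun v => c v = l),
      ((univ : Finset (Fin n)).filter (fun u => c u ≠ c v)).card ^ q =
      ((univ : Finset (Fin n)).filter (fun v => c v = l)).card *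
        ((univ : Finset (Fin n)).filter (fun u => ¬ c u = l)).card ^ q := by
    rw [← smul_eq_mul, ← Finset.sum_const]
    apply Finset.sum_congr rfl
    intro v hv
    rw [Finset.mem_filter] at hv
    rw [hv.2]
  rw [h2]
  have h3 := Finset.card_filter_add_card_filter_not (s := (univ : Finset (Fin n))) (fun u => c u = l)
  rw [Finset.card_univ, Fintype.card_fin] at h3
  set m := ((univ : Finset (Fin n)).filter (fun v => c v = l)).card
  set a := ((univ : Finset (Fin n)).filter (fun u => ¬ c u = l)).card
  have h4 := bern a m q
  rw [add_comm a m, h3, pow_succ] at h4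
  nlinarith [Nat.zero_le (a ^ q * n)]

set_option maxHeartbeats 1000000 in
theorem caseA_count {n : ℕ} (G : SimpleGraph (Fin n)) {ι L : Type} [Nonempty ι] [Fintype ι]
    (c : Fin n → L) (Ex : Finset (Fin n)) (z K : ℕ) (hK : (univ.image c).card ≤ K) (hK0 : 0 < K)
    (hq : Fintype.card ι = K * z) (hEx : z * Ex.card ≤ n)
    (hlab : ∀ v, z * ((univ : Finset (Fin n)).filter (fun u => c u = c v)).card ≤ 2 * n)
    (hcl : ∀ u ∉ Ex, ∀ v, c u = c v → z * symd G u v ≤ 4 * n) :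
    z * ∑ f : ι → Fin n, ((univ : Finset (Fin n × Fin n)).filter (fun x =>
      phi c f x.1 = phi c f x.2 ∨ ¬ (G.Adj x.1 x.2 ↔ G.Adj (phi c f x.1) (phi c f x.2)))).card ≤
      14 * n ^ 2 * (univ : Finset (ι → Fin n)).card := by
  set Nf := (univ : Finset (ι → Fin n)).card with hNf
  have hNf' : Nf = n ^ Fintype.card ι := by simp [hNf]
  let UH := ((univ : Finset ((ι → Fin n) × Fin n)).filter (fun x => ¬ Hit c x.1 x.2)).card
  have hUH : z * UH ≤ n * Nf := by
    have := unhit_count (ι := ι) c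
    rw [hq] at this
    have h2 : K * (z * UH) ≤ K * (n * Nf) := by
      calc K * (z * UH) = K * z * UH := by ring
        _ ≤ _ := this
        _ ≤ K * (n * Nf) := by rw [hNf', hq]; exact Nat.mul_le_mul_right _ hK
    exact Nat.le_of_mul_le_mul_left h2 hK0
  -- bound per f
  let uh : (ι → Fin n) → ℕ := fun f => ((univ : Finset (Fin n)).filter (fun v => ¬ Hit c f v)).card
  have huh : ∑ f, uh f = UH := by
    simp only [uh, UH]
    rw [Finset.card_filter _ (univ : Finset ((ι → Fin n) × Fin n)), ← Finset.univ_product_univ, Finset.sum_product]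
    simp only [← Finset.card_filter]
  let s5 : (ι → Fin n) → ℕ := fun f => ((univ : Finset (Fin n × Fin n)).filter (fun x =>
    Hit c f x.1 ∧ Hit c f x.2 ∧ c x.1 ≠ c x.2 ∧ x.1 ∉ Ex ∧
      ¬ (G.Adj x.1 (phi c f x.2) ↔ G.Adj (phi c f x.1) (phi c f x.2)))).card
  have hs5 : z * ∑ f, s5 f ≤ 4 * n ^ 2 * Nf := by
    have h1 : ∑ f, s5 f ≤ ∑ f : ι → Fin n, ∑ u : Fin n, ((univ : Finset (Fin n)).filter (fun v =>
        Hit c f u ∧ u ∉ Ex ∧ ¬ (G.Adj u v ↔ G.Adj (phi c f u) v))).card := by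
      have := swap_count G (ι := ι) c Ex
      simp only [Finset.card_filter] at this
      rw [← Finset.univ_product_univ, Finset.sum_product, Finset.sum_product] at this
      simp only [← Finset.univ_product_univ (α := Fin n), Finset.sum_product] at this
      simp only [s5, Finset.card_filter]
      simp only [← Finset.univ_product_univ (α := Fin n), Finset.sum_product]
      exact this
    calc z * ∑ f, s5 f ≤ z * _ := Nat.mul_le_mul_left _ h1
      _ = ∑ f : ι → Fin n, ∑ u : Fin n, z * ((univ : Finset (Fin n)).filter (fun v =>
        Hit c f u ∧ u ∉ Ex ∧ ¬ (G.Adj u v ↔ G.Adj (phi c f u) v))).card := by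
          simp only [Finset.mul_sum]
      _ ≤ ∑ f : ι → Fin n, ∑ u : Fin n, 4 * n := by
          apply Finset.sum_le_sum; intro f _
          apply Finset.sum_le_sum; intro u _
          by_cases h : Hit c f u ∧ u ∉ Ex
          · refine le_trans (Nat.mul_le_mul_left _ (Finset.card_le_card ?_)) (hcl u h.2 (phi c f u) (phi_spec c f u h.1).symm)
            intro w hw
            simp only [Finset.mem_filter, Finset.mem_univ, true_and] at hw ⊢
            exact hw.2.2
          · rw [Finset.filter_false_of_mem]
            · simp
            · intro w _ hw
              exact h ⟨hw.1, hw.2.1⟩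
      _ = 4 * n ^ 2 * Nf := by
          simp only [Finset.sum_const, smul_eq_mul, hNf, Finset.card_univ, Fintype.card_fin]; ring
  let eqc := ((univ : Finset (Fin n × Fin n)).filter (fun x => c x.2 = c x.1)).card
  have heqc : z * eqc ≤ 2 * n ^ 2 := by
    simp only [eqc]
    rw [Finset.card_filter, ← Finset.univ_product_univ, Finset.sum_product]
    simp only [← Finset.card_filter]
    rw [Finset.mul_sum]
    calc _ ≤ ∑ u : Fin n, 2 * n := Finset.sum_le_sum (fun u _ => hlab u)
      _ = _ := by simp; ring
  let s4 : (ι → Fin n) → ℕ := fun f => ((univ : Finset (Fin n × Fin n)).filter (fun x =>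
    Hit c f x.2 ∧ x.2 ∉ Ex ∧ ¬ (G.Adj x.1 x.2 ↔ G.Adj x.1 (phi c f x.2)))).card
  have hs4 : ∀ f, z * s4 f ≤ 4 * n ^ 2 := by
    intro f
    simp only [s4]
    rw [Finset.card_filter, ← Finset.univ_product_univ, Finset.sum_product_right]
    simp only [← Finset.card_filter]
    rw [Finset.mul_sum]
    calc _ ≤ ∑ u : Fin n, 4 * n := by
          apply Finset.sum_le_sum; intro u _
          by_cases h : Hit c f u ∧ u ∉ Ex
          · refine le_trans (Nat.mul_le_mul_left _ (Finset.card_le_card ?_)) (hcl u h.2 (phi c f u) (phi_spec c f u h.1).symm)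
            intro w hw
            simp only [Finset.mem_filter, Finset.mem_univ, true_and] at hw ⊢
            rw [G.adj_comm u, G.adj_comm _ w]
            exact hw.2.2
          · rw [Finset.filter_false_of_mem]
            · simp
            · intro w _ hw
              exact h ⟨hw.1, hw.2.1⟩
      _ = _ := by simp; ring
  have hf : ∀ f : ι → Fin n, ((univ : Finset (Fin n × Fin n)).filter (fun x =>
      phi c f x.1 = phi c f x.2 ∨ ¬ (G.Adj x.1 x.2 ↔ G.Adj (phi c f x.1) (phi c f x.2)))).card ≤
      Ex.card * n + n * Ex.card + uh f * n + n * uh f + eqc + s4 f + s5 f := by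
    intro f
    have hsub : ((univ : Finset (Fin n × Fin n)).filter (fun x =>
      phi c f x.1 = phi c f x.2 ∨ ¬ (G.Adj x.1 x.2 ↔ G.Adj (phi c f x.1) (phi c f x.2)))) ⊆
      (Ex ×ˢ univ) ∪ (univ ×ˢ Ex) ∪ (((univ : Finset (Fin n)).filter (fun v => ¬ Hit c f v)) ×ˢ univ)
      ∪ (univ ×ˢ ((univ : Finset (Fin n)).filter (fun v => ¬ Hit c f v)))
      ∪ ((univ : Finset (Fin n × Fin n)).filter (fun x => c x.2 = c x.1))
      ∪ ((univ : Finset (Fin n × Fin n)).filter (fun x =>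
    Hit c f x.2 ∧ x.2 ∉ Ex ∧ ¬ (G.Adj x.1 x.2 ↔ G.Adj x.1 (phi c f x.2))))
      ∪ ((univ : Finset (Fin n × Fin n)).filter (fun x =>
    Hit c f x.1 ∧ Hit c f x.2 ∧ c x.1 ≠ c x.2 ∧ x.1 ∉ Ex ∧
      ¬ (G.Adj x.1 (phi c f x.2) ↔ G.Adj (phi c f x.1) (phi c f x.2)))) := by
      rintro ⟨u, v⟩ hx
      simp only [Finset.mem_filter, Finset.mem_univ, true_and, Finset.mem_union, Finset.mem_product, and_true] at hx ⊢
      by_contra hcon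
      simp only [not_or] at hcon
      obtain ⟨⟨⟨⟨⟨⟨e1, e2⟩, e3⟩, e4⟩, e5⟩, h6⟩, h7⟩ := hcon
      rw [not_not] at e3 e4
      have e6 : phi c f u ≠ phi c f v := fun h => e5 (by
        rw [← phi_spec c f u e3, ← phi_spec c f v e4, h])
      have h6' : G.Adj u v ↔ G.Adj u (phi c f v) := by
        by_contra hh; exact h6 ⟨e4, e2, hh⟩
      have h7' : G.Adj u (phi c f v) ↔ G.Adj (phi c f u) (phi c f v) := by
        by_contra hh; exact h7 ⟨e3, e4, fun h => e5 h.symm, e1, hh⟩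
      rcases hx with hx | hx
      · exact e6 hx
      · exact hx (h6'.trans h7')
    refine (Finset.card_le_card hsub).trans ?_
    refine (Finset.card_union_le _ _).trans (Nat.add_le_add ?_ le_rfl)
    refine (Finset.card_union_le _ _).trans (Nat.add_le_add ?_ le_rfl)
    refine (Finset.card_union_le _ _).trans (Nat.add_le_add ?_ le_rfl)
    refine (Finset.card_union_le _ _).trans (Nat.add_le_add ?_ ?_)
    refine (Finset.card_union_le _ _).trans (Nat.add_le_add ?_ ?_)
    refine (Finset.card_union_le _ _).trans (Nat.add_le_add ?_ ?_)
    all_goals simp [Finset.card_product, uh]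
  calc z * _ ≤ z * ∑ f : ι → Fin n, (Ex.card * n + n * Ex.card + uh f * n + n * uh f + eqc + s4 f + s5 f) :=
        Nat.mul_le_mul_left _ (Finset.sum_le_sum (fun f _ => hf f))
    _ = 2 * n * (z * Ex.card) * Nf + 2 * n * (z * UH) + (z * eqc) * Nf + (∑ f, z * s4 f) + z * ∑ f, s5 f := by
        rw [← huh]
        simp only [Finset.sum_add_distrib, Finset.sum_const, smul_eq_mul, ← Finset.mul_sum, ← Finset.sum_mul]
        rw [← hNf]
        ring
    _ ≤ 2 * n * n * Nf + 2 * n * (n * Nf) + (2 * n ^ 2) * Nf + (∑ f : ι → Fin n, 4 * n ^ 2) + 4 * n ^ 2 * Nf := by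
        have hS4 := Finset.sum_le_sum (fun f (_ : f ∈ (univ : Finset (ι → Fin n))) => hs4 f)
        refine Nat.add_le_add (Nat.add_le_add (Nat.add_le_add (Nat.add_le_add ?_ ?_) ?_) hS4) hs5
        · exact Nat.mul_le_mul_right _ (Nat.mul_le_mul_left _ hEx)
        · exact Nat.mul_le_mul_left _ hUH
        · exact Nat.mul_le_mul_right _ heqc
    _ = _ := by
        simp only [Finset.sum_const, smul_eq_mul, ← hNf]
        ring

theorem blow_bad (𝓕 : Set (Σ k : ℕ, SimpleGraph (Fin k))) (hblow : BlowupQuality (InducedFree 𝓕))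
    {n : ℕ} (G : SimpleGraph (Fin n)) (ε : ℝ) (hfar : Far (InducedFree 𝓕) G ε) (φ : Fin n → Fin n)
    (hcount : (((univ : Finset (Fin n × Fin n)).filter (fun x =>
      φ x.1 = φ x.2 ∨ ¬ (G.Adj x.1 x.2 ↔ G.Adj (φ x.1) (φ x.2)))).card : ℝ) < ε * (n : ℝ) ^ 2) :
    BadSet 𝓕 G (Set.range φ) := by
  by_contra hbad
  let W := (univ : Finset (Fin n)).image φ
  let e := W.orderIsoOfFin rfl
  have hW : ∀ v, φ v ∈ W := fun v => Finset.mem_image_of_mem _ (Finset.mem_univ _)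
  let ψ : Fin n → Fin W.card := fun v => e.symm ⟨φ v, hW v⟩
  have hψ : ∀ v, (e (ψ v) : Fin n) = φ v := fun v => by simp [ψ]
  have hψeq : ∀ u v, ψ u = ψ v ↔ φ u = φ v := by
    intro u v
    constructor
    · intro h; rw [← hψ u, ← hψ v, h]
    · intro h; simp [ψ, h]
  have hF : inducedOn G W rfl ∈ InducedFree 𝓕 W.card := by
    intro p hp
    by_contra hne
    rw [not_isEmpty_iff] at hne
    obtain ⟨j⟩ := hne
    apply hbad
    refine ⟨p, hp, ⟨⟨fun i => (e (j i) : Fin n), ?_⟩, ?_⟩, ?_⟩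
    · intro a b h
      exact j.injective (e.injective (Subtype.ext h))
    · intro a b
      exact j.map_rel_iff' (a := a) (b := b)
    · rintro _ ⟨i, rfl⟩
      have := (e (j i)).2
      simp only [W, Finset.mem_image, Finset.mem_univ, true_and] at this
      exact this
  obtain ⟨g, hg⟩ := hblow _ _ hF
  let H : SimpleGraph (Fin n) :=
    { Adj := fun u v => u ≠ v ∧ (if ψ u = ψ v then g (ψ u) = true else (inducedOn G W rfl).Adj (ψ u) (ψ v))
      symm := by
        constructor
        rintro u v ⟨h1, h2⟩
        refine ⟨h1.symm, ?_⟩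
        by_cases h : ψ u = ψ v
        · rw [if_pos h] at h2
          rw [if_pos h.symm, ← h]; exact h2
        · rw [if_neg h] at h2
          rw [if_neg (fun h' => h h'.symm)]; exact h2.symm
      loopless := by
        constructor
        rintro u ⟨h1, _⟩
        exact h1 rfl }
  have hH : H ∈ InducedFree 𝓕 n := by
    apply hg
    refine ⟨ψ, ?_, ?_⟩
    · intro i
      have := (e i).2
      simp only [W, Finset.mem_image, Finset.mem_univ, true_and] at this
      obtain ⟨v, hv⟩ := this
      refine ⟨v, ?_⟩
      apply e.injective
      apply Subtype.ext
      rw [hψ, hv]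
    · intro u v huv
      constructor
      · intro h; exact h.2
      · intro h; exact ⟨huv, h⟩
  have h1 := hfar H hH
  have h2 : editDist G H ≤ ((univ : Finset (Fin n × Fin n)).filter (fun x =>
      φ x.1 = φ x.2 ∨ ¬ (G.Adj x.1 x.2 ↔ G.Adj (φ x.1) (φ x.2)))).card := by
    refine le_trans ?_ (Finset.card_image_le (f := fun x : Fin n × Fin n => s(x.1, x.2)))
    unfold editDist
    rw [← Set.ncard_coe_finset]
    apply Set.ncard_le_ncard _ (Finset.finite_toSet _)
    intro x
    induction x using Sym2.ind with
    | _ u v =>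
      intro hx
      rw [Finset.mem_coe, Finset.mem_image]
      refine ⟨(u, v), ?_, rfl⟩
      simp only [Finset.mem_filter, Finset.mem_univ, true_and]
      by_contra hcon
      rw [not_or, not_not] at hcon
      have hne : u ≠ v := fun h => hcon.1 (by rw [h])
      have : H.Adj u v ↔ G.Adj u v := by
        rw [hcon.2]
        simp only [H, hψeq, hcon.1, if_false, hne, ne_eq, not_false_eq_true, true_and, inducedOn, SimpleGraph.comap_adj]
        rw [show ((W.orderIsoOfFin rfl) (ψ u) : Fin n) = φ u from hψ u, show ((W.orderIsoOfFin rfl) (ψ v) : Fin n) = φ v from hψ v]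
      simp only [Set.mem_ofPred_eq, SimpleGraph.mem_edgeSet, this] at hx
      tauto
  have h3 : (editDist G H : ℝ) ≤ _ := Nat.cast_le.2 h2
  linarith

theorem symd_comm {n : ℕ} (G : SimpleGraph (Fin n)) (u v : Fin n) : symd G u v = symd G v u := by
  unfold symd
  congr 1
  ext w
  simp only [Finset.mem_filter, Finset.mem_univ, true_and]
  tauto

theorem symd_tri {n : ℕ} (G : SimpleGraph (Fin n)) (u v w : Fin n) :
    symd G u w ≤ symd G u v + symd G v w := by
  unfold symd
  refine le_trans (Finset.card_le_card ?_) (Finset.card_union_le _ _)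
  intro x
  simp only [Finset.mem_filter, Finset.mem_univ, true_and, Finset.mem_union]
  tauto

theorem symd_self {n : ℕ} (G : SimpleGraph (Fin n)) (u : Fin n) : symd G u u = 0 := by
  simp [symd]

def nball {n : ℕ} (G : SimpleGraph (Fin n)) (z : ℕ) (v : Fin n) : Finset (Fin n) :=
  univ.filter (fun w => z * symd G v w ≤ n)

theorem exists_net {n : ℕ} (hn : 0 < n) (G : SimpleGraph (Fin n)) (z e : ℕ) :
    ∃ S : Finset (Fin n), S.card ≤ e ∧ ∀ v, n ≤ e * (nball G z v).card →
      ∃ s ∈ S, z * symd G v s ≤ 2 * n := by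
  let D := (univ : Finset (Fin n)).filter (fun v => n ≤ e * (nball G z v).card)
  let C := D.powerset.filter (fun S : Finset (Fin n) => (S : Set (Fin n)).PairwiseDisjoint (nball G z))
  have hC : C.Nonempty := ⟨∅, by simp [C]⟩
  obtain ⟨S, hS, hmax⟩ := Finset.exists_max_image C Finset.card hC
  simp only [C, Finset.mem_filter, Finset.mem_powerset] at hS hmax
  refine ⟨S, ?_, ?_⟩
  · have h1 := Finset.card_biUnion (s := S) (t := nball G z) (fun a ha b hb hab => hS.2 ha hb hab)
    have h2 : (S.biUnion (nball G z)).card ≤ n := by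
      simpa using Finset.card_le_univ (S.biUnion (nball G z))
    have h3 : S.card * n ≤ ∑ s ∈ S, e * (nball G z s).card := by
      rw [← smul_eq_mul]
      apply Finset.card_nsmul_le_sum
      intro s hs
      have := hS.1 hs
      simp only [D, Finset.mem_filter] at this
      exact this.2
    rw [← Finset.mul_sum, ← h1] at h3
    exact Nat.le_of_mul_le_mul_right (h3.trans (Nat.mul_le_mul_left e h2)) hn
  · intro v hv
    by_contra hcon
    push Not at hcon
    have hdis : ∀ s ∈ S, Disjoint (nball G z v) (nball G z s) := by
      intro s hs
      rw [Finset.disjoint_left]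
      intro w hw hw'
      have := hcon s hs
      simp only [nball, Finset.mem_filter, Finset.mem_univ, true_and] at hw hw'
      rw [symd_comm] at hw'
      have h4 := Nat.mul_le_mul_left z (symd_tri G v w s)
      rw [mul_add] at h4
      omega
    have hself : v ∈ nball G z v := by simp [nball, symd_self]
    have hvS : v ∉ S := fun h => (Finset.disjoint_left.1 (hdis v h)) hself hself
    have := hmax (insert v S) ⟨?_, ?_⟩
    · rw [Finset.card_insert_of_notMem hvS] at this
      omega
    · rw [Finset.insert_subset_iff]
      exact ⟨by simp [D, hv], hS.1⟩
    · rw [Finset.coe_insert]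
      exact hS.2.insert (fun s hs _ => hdis s hs)

theorem mod_class {n z : ℕ} (hzn : z ≤ n) (r : ℕ) :
    z * ((univ : Finset (Fin n)).filter (fun u => u.val % z = r)).card ≤ 2 * n := by
  have h : ((univ : Finset (Fin n)).filter (fun u => u.val % z = r)).card ≤ (Finset.range (n / z + 1)).card := by
    apply Finset.card_le_card_of_injOn (fun u => u.val / z)
    · intro u _
      simp only [Finset.coe_range, Set.mem_Iio]
      exact Nat.lt_succ_of_le (Nat.div_le_div_right u.2.le)
    · intro u hu v hv h
      simp only [Finset.coe_filter, Finset.mem_univ, true_and, Set.mem_ofPred_eq] at hu hv h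
      apply Fin.ext
      rw [← Nat.div_add_mod u.val z, ← Nat.div_add_mod v.val z, h, hu, hv]
  rw [Finset.card_range] at h
  have h2 := Nat.mul_le_mul_left z h
  have h3 := Nat.mul_div_le n z
  rw [mul_add, mul_one] at h2
  omega

theorem caseA (𝓕 : Set (Σ k : ℕ, SimpleGraph (Fin k))) (hblow : BlowupQuality (InducedFree 𝓕))
    {n : ℕ} (G : SimpleGraph (Fin n)) (ε : ℝ) (hε : 0 < ε) (hfar : Far (InducedFree 𝓕) G ε)
    {ι : Type} [Fintype ι] (z e : ℕ) (hι : Fintype.card ι = (e + 1) * z * z) (hz : 42 ≤ ε * z) (hz0 : 0 < z) (hzn : z ≤ n)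
    (hEx : z * ((univ : Finset (Fin n)).filter (fun v => ¬ n ≤ e * (nball G z v).card)).card ≤ n) :
    2 * (univ : Finset (ι → Fin n)).card ≤
      3 * ((univ : Finset (ι → Fin n)).filter (fun f => BadSet 𝓕 G (Set.range f))).card := by
  have hn : 0 < n := by omega
  obtain ⟨S, hS, hnet⟩ := exists_net hn G z e
  have hch : ∀ v, ∃ s, n ≤ e * (nball G z v).card → (s ∈ S ∧ z * symd G v s ≤ 2 * n) := by
    intro v
    by_cases h : n ≤ e * (nball G z v).card
    · obtain ⟨s, hs⟩ := hnet v h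
      exact ⟨s, fun _ => hs⟩
    · exact ⟨v, fun h' => absurd h' h⟩
  choose s hs using hch
  let c : Fin n → Option (Fin n) × ℕ := fun v =>
    (if n ≤ e * (nball G z v).card then some (s v) else none, v.val % z)
  have : Nonempty ι := by rw [← Fintype.card_pos_iff, hι]; positivity
  have hmain := caseA_count G (ι := ι) c (univ.filter (fun v => ¬ n ≤ e * (nball G z v).card)) z ((e + 1) * z)
    (by
      refine le_trans (Finset.card_le_card (t := (insert none (S.image some)) ×ˢ Finset.range z) ?_) ?_
      · intro x hx
        simp only [Finset.mem_image, Finset.mem_univ, true_and] at hx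
        obtain ⟨v, rfl⟩ := hx
        simp only [c, Finset.mem_product, Finset.mem_range]
        refine ⟨?_, Nat.mod_lt _ hz0⟩
        by_cases h : n ≤ e * (nball G z v).card
        · rw [if_pos h]
          exact Finset.mem_insert_of_mem (Finset.mem_image_of_mem _ (hs v h).1)
        · rw [if_neg h]
          exact Finset.mem_insert_self _ _
      · rw [Finset.card_product, Finset.card_range]
        apply Nat.mul_le_mul_right
        refine (Finset.card_insert_le _ _).trans ?_
        have := Finset.card_image_le (s := S) (f := some)
        omega)
    (by positivity) hι hEx
    (by
      intro v
      refine le_trans (Nat.mul_le_mul_left _ (Finset.card_le_card ?_)) (mod_class hzn (v.val % z))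
      intro u hu
      simp only [Finset.mem_filter, Finset.mem_univ, true_and, c, Prod.mk.injEq] at hu ⊢
      exact hu.2)
    (by
      intro u hu v huv
      simp only [Finset.mem_filter, Finset.mem_univ, true_and, not_not] at hu
      simp only [c, Prod.mk.injEq] at huv
      have h1 := huv.1
      rw [if_pos hu] at h1
      by_cases hv : n ≤ e * (nball G z v).card
      · rw [if_pos hv, Option.some.injEq] at h1
        have a1 := (hs u hu).2
        have a2 := (hs v hv).2
        rw [symd_comm, ← h1] at a2
        have h4 := Nat.mul_le_mul_left z (symd_tri G u (s u) v)
        rw [mul_add] at h4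
        omega
      · rw [if_neg hv] at h1
        cases h1)
  let err : (ι → Fin n) → ℕ := fun f => ((univ : Finset (Fin n × Fin n)).filter (fun x =>
      phi c f x.1 = phi c f x.2 ∨ ¬ (G.Adj x.1 x.2 ↔ G.Adj (phi c f x.1) (phi c f x.2)))).card
  change z * ∑ f, err f ≤ _ at hmain
  set Nf := (univ : Finset (ι → Fin n)).card
  have hsplit := Finset.card_filter_add_card_filter_not (s := (univ : Finset (ι → Fin n)))
    (fun f => BadSet 𝓕 G (Set.range f))
  set good := ((univ : Finset (ι → Fin n)).filter (fun f => BadSet 𝓕 G (Set.range f))).card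
  have hlow : ∀ f ∈ (univ : Finset (ι → Fin n)).filter (fun f => ¬ BadSet 𝓕 G (Set.range f)),
      ε * (n : ℝ) ^ 2 ≤ (err f : ℝ) := by
    intro f hf
    by_contra hcon
    push Not at hcon
    rw [Finset.mem_filter] at hf
    apply hf.2
    obtain ⟨p, hp, j, hj⟩ := blow_bad 𝓕 hblow G ε hfar (phi c f) hcon
    refine ⟨p, hp, j, hj.trans ?_⟩
    rintro _ ⟨v, rfl⟩
    exact ⟨_, rfl⟩
  set bad := (univ : Finset (ι → Fin n)).filter (fun f => ¬ BadSet 𝓕 G (Set.range f))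
  have h1 : (bad.card : ℝ) * (ε * (n : ℝ) ^ 2) ≤ ((∑ f, err f : ℕ) : ℝ) := by
    rw [← nsmul_eq_mul, Nat.cast_sum]
    refine (Finset.card_nsmul_le_sum bad (fun f => (err f : ℝ)) _ hlow).trans ?_
    exact Finset.sum_le_sum_of_subset_of_nonneg (Finset.subset_univ _) (fun _ _ _ => Nat.cast_nonneg _)
  have h2 : (z : ℝ) * ((∑ f, err f : ℕ) : ℝ) ≤ 14 * (n : ℝ) ^ 2 * Nf := by exact_mod_cast hmain
  have hn2 : (0 : ℝ) < (n : ℝ) ^ 2 := by positivity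
  have hz' : (0 : ℝ) < z := by exact_mod_cast hz0
  have h3 : (n : ℝ) ^ 2 * ((ε * z) * bad.card) ≤ (n : ℝ) ^ 2 * (14 * Nf) := by
    have := mul_le_mul_of_nonneg_left h1 hz'.le
    nlinarith
  have h4 := le_of_mul_le_mul_left h3 hn2
  have h5 : (42 : ℝ) * bad.card ≤ 14 * Nf :=
    (mul_le_mul_of_nonneg_right hz (Nat.cast_nonneg _)).trans h4
  have h6 : 42 * bad.card ≤ 14 * Nf := by exact_mod_cast h5
  have h7 : good + bad.card = Nf := hsplit
  omega

theorem pi_bound {n : ℕ} {ι : Type} [Fintype ι] (s : ι → Finset (Fin n)) (J1 J : Finset ι)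
    (hd : Disjoint J1 J) (m : ℕ) (h1 : ∀ i ∈ J1, (s i).card ≤ 1) (hJ : ∀ i ∈ J, (s i).card ≤ m) :
    (Fintype.piFinset s).card * n ^ J1.card * n ^ J.card ≤ m ^ J.card * n ^ Fintype.card ι := by
  have e1 : n ^ J1.card = ∏ i : ι, if i ∈ J1 then n else 1 := by
    rw [Finset.prod_ite_mem, Finset.univ_inter, Finset.prod_const]
  have e2 : n ^ J.card = ∏ i : ι, if i ∈ J then n else 1 := by
    rw [Finset.prod_ite_mem, Finset.univ_inter, Finset.prod_const]
  have e3 : m ^ J.card = ∏ i : ι, if i ∈ J then m else 1 := by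
    rw [Finset.prod_ite_mem, Finset.univ_inter, Finset.prod_const]
  have e4 : n ^ Fintype.card ι = ∏ i : ι, n := by
    rw [Finset.prod_const, Finset.card_univ]
  rw [e1, e2, e3, e4, Fintype.card_piFinset, ← Finset.prod_mul_distrib, ← Finset.prod_mul_distrib,
    ← Finset.prod_mul_distrib]
  apply Finset.prod_le_prod'
  intro i _
  by_cases hi1 : i ∈ J1
  · have hi : i ∉ J := Finset.disjoint_left.1 hd hi1
    simp only [hi1, hi, if_true, if_false, mul_one, one_mul]
    have := Nat.mul_le_mul_right n (h1 i hi1)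
    simpa using this
  · by_cases hi : i ∈ J
    · simp only [hi1, hi, if_true, if_false, mul_one]
      exact Nat.mul_le_mul_right n (hJ i hi)
    · simp only [hi1, hi, if_false, mul_one, one_mul]
      simpa using Finset.card_le_univ (s i)

theorem cnt2 {n : ℕ} {ι : Type} [Fintype ι] (a b : ι) (hab : a ≠ b) (J : Finset ι) (ha : a ∉ J) (hb : b ∉ J)
    (Q : Fin n → Fin n → Prop) (A : Fin n → Fin n → Finset (Fin n)) (m : ℕ)
    (hA : ∀ u v, Q u v → (A u v).card ≤ m) :
    ((univ : Finset (ι → Fin n)).filter (fun h => Q (h a) (h b) ∧ ∀ t ∈ J, h t ∈ A (h a) (h b))).card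
      * n ^ 2 * n ^ J.card ≤
    ((univ : Finset (Fin n × Fin n)).filter (fun x => Q x.1 x.2)).card * (m ^ J.card * n ^ Fintype.card ι) := by
  have hmaps : ∀ h ∈ (univ : Finset (ι → Fin n)).filter (fun h => Q (h a) (h b) ∧ ∀ t ∈ J, h t ∈ A (h a) (h b)),
      (h a, h b) ∈ (univ : Finset (Fin n × Fin n)).filter (fun x => Q x.1 x.2) := by
    intro h hh
    simp only [Finset.mem_filter, Finset.mem_univ, true_and] at hh ⊢
    exact hh.1
  rw [Finset.card_eq_sum_card_fiberwise hmaps, Finset.sum_mul, Finset.sum_mul, ← smul_eq_mul (Finset.card _)]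
  apply Finset.sum_le_card_nsmul
  rintro ⟨u, v⟩ huv
  simp only [Finset.mem_filter, Finset.mem_univ, true_and] at huv
  have hb := pi_bound (fun i : ι => if i = a then {u} else if i = b then {v} else if i ∈ J then A u v else univ)
    {a, b} J (by
      rw [Finset.disjoint_left]
      intro i hi
      simp only [Finset.mem_insert, Finset.mem_singleton] at hi
      rcases hi with rfl | rfl <;> assumption) m (by
      intro i hi
      simp only [Finset.mem_insert, Finset.mem_singleton] at hi
      by_cases h : i = a
      · simp [h]
      · have h' : i = b := by tauto
        simp [h', hab.symm]) (by
      intro i hi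
      have h1 : i ≠ a := fun h => ha (h ▸ hi)
      have h2 : i ≠ b := fun h => hb (h ▸ hi)
      simp only [h1, h2, hi, if_true, if_false]
      exact hA u v huv)
  rw [Finset.card_pair hab] at hb
  refine le_trans (Nat.mul_le_mul_right _ (Nat.mul_le_mul_right _ (Finset.card_le_card ?_))) hb
  intro h hh
  simp only [Finset.mem_filter, Finset.mem_univ, true_and, Prod.mk.injEq] at hh
  obtain ⟨⟨_, h1⟩, h2, h3⟩ := hh
  rw [Fintype.mem_piFinset]
  intro i
  by_cases hi : i = a
  · simp [hi, h2]
  · by_cases hi' : i = b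
    · simp [hi', h3, hab.symm]
    · by_cases hJ : i ∈ J
      · simp only [hi, hi', hJ, if_true, if_false]
        have := h1 i hJ
        rwa [h2, h3] at this
      · simp [hi, hi', hJ]

theorem union_bd {κ X : Type} [Fintype X] (s : Finset κ) (P : κ → X → Prop) (C N : ℕ)
    (h : ∀ a ∈ s, C * ((univ : Finset X).filter (P a)).card ≤ N) (hC : 12 * s.card ≤ C) :
    12 * ((univ : Finset X).filter (fun x => ∃ a ∈ s, P a x)).card ≤ N := by
  rcases s.eq_empty_or_nonempty with rfl | hne
  · simp
  · have hpos := Finset.card_pos.2 hne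
    have h1 : ((univ : Finset X).filter (fun x => ∃ a ∈ s, P a x)).card ≤
        ∑ a ∈ s, ((univ : Finset X).filter (P a)).card := by
      refine le_trans (Finset.card_le_card ?_) Finset.card_biUnion_le
      intro x hx
      simp only [Finset.mem_filter, Finset.mem_univ, true_and, Finset.mem_biUnion] at hx ⊢
      exact hx
    set U := ((univ : Finset X).filter (fun x => ∃ a ∈ s, P a x)).card
    have h2 : C * U ≤ s.card * N := by
      calc C * U ≤ C * _ := Nat.mul_le_mul_left _ h1
        _ = ∑ a ∈ s, C * ((univ : Finset X).filter (P a)).card := Finset.mul_sum _ _ _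
        _ ≤ s.card * N := by
          rw [← smul_eq_mul]
          exact Finset.sum_le_card_nsmul _ _ _ h
    refine Nat.le_of_mul_le_mul_left ?_ hpos
    calc s.card * (12 * U) = (12 * s.card) * U := by ring
      _ ≤ C * U := Nat.mul_le_mul_right _ hC
      _ ≤ _ := h2

theorem sauer_big {T D : ℕ} (hT : 2 ≤ T) (𝒜 : Finset (Finset (Fin T))) (hA : T ^ D ≤ 𝒜.card) :
    ∃ A : Finset (Fin T), D ≤ A.card ∧ 𝒜.Shatters A := by
  by_contra hcon
  push Not at hcon
  have h1 : 𝒜.shatterer ⊆ (Finset.range D).biUnion (fun j => (univ : Finset (Fin T)).powersetCard j) := by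
    intro A hA
    rw [Finset.mem_shatterer] at hA
    rw [Finset.mem_biUnion]
    refine ⟨A.card, ?_, by simp [Finset.mem_powersetCard]⟩
    rw [Finset.mem_range]
    by_contra h
    exact hcon A (not_lt.1 h) hA
  have h2 := (Finset.card_le_card_shatterer 𝒜).trans ((Finset.card_le_card h1).trans Finset.card_biUnion_le)
  have h3 : ∑ j ∈ Finset.range D, ((univ : Finset (Fin T)).powersetCard j).card ≤ ∑ j ∈ Finset.range D, T ^ j := by
    apply Finset.sum_le_sum
    intro j _
    rw [Finset.card_powersetCard, Finset.card_univ, Fintype.card_fin]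
    exact Nat.choose_le_pow T j
  have h4 := Nat.geomSum_lt (s := Finset.range D) (n := D) hT (fun k hk => Finset.mem_range.1 hk)
  omega

theorem caseB_det (𝓕 : Set (Σ k : ℕ, SimpleGraph (Fin k))) {D : ℕ}
    {n : ℕ} (G : SimpleGraph (Fin n))
    (hD : ∀ (X : Set (Fin n)) (Y : Finset (Fin n)),
      D ≤ Y.card → (∀ B ⊆ Y, ∃ x ∈ X, ∀ y ∈ Y, (G.Adj x y ↔ y ∈ B)) → BadSet 𝓕 G (X ∪ Y))
    {T k : ℕ} (hT : 2 ≤ T) (hk : T ^ D ≤ k) (R : Set (Fin n)) (x : Fin k → Fin n) (y : Fin T → Fin n)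
    (hx : ∀ i, x i ∈ R) (hy : ∀ t, y t ∈ R)
    (hsep : ∀ i i', i ≠ i' → ∃ t, ¬ (G.Adj (x i) (y t) ↔ G.Adj (x i') (y t))) : BadSet 𝓕 G R := by
  let tr : Fin k → Finset (Fin T) := fun i => univ.filter (fun t => G.Adj (x i) (y t))
  have htr : ∀ i t, t ∈ tr i ↔ G.Adj (x i) (y t) := fun i t => by simp [tr]
  have hinj : Function.Injective tr := by
    intro i i' h
    by_contra hne
    obtain ⟨t, ht⟩ := hsep i i' hne
    rw [← htr, ← htr, h] at ht
    exact ht Iff.rfl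
  obtain ⟨A, hA, hsh⟩ := sauer_big (D := D) hT (univ.image tr) (by
    rw [Finset.card_image_of_injective _ hinj]; simpa using hk)
  have yinj : Set.InjOn y A := by
    intro t0 h0 t1 h1 h
    obtain ⟨u, hu, hu'⟩ := hsh (t := {t0}) (by simpa using h0)
    rw [Finset.mem_image] at hu
    obtain ⟨i, _, rfl⟩ := hu
    have : t0 ∈ A ∩ tr i := by rw [hu']; simp
    rw [Finset.mem_inter, htr] at this
    have h2 : t1 ∈ A ∩ tr i := by
      rw [Finset.mem_inter, htr, ← h]
      exact ⟨h1, this.2⟩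
    rw [hu', Finset.mem_singleton] at h2
    exact h2.symm
  obtain ⟨p, hp, j, hj⟩ := hD (Set.range x) (A.image y) (by rwa [Finset.card_image_of_injOn yinj]) (by
    intro B hB
    obtain ⟨u, hu, hu'⟩ := hsh (t := A.filter (fun t => y t ∈ B)) (Finset.filter_subset _ _)
    rw [Finset.mem_image] at hu
    obtain ⟨i, _, rfl⟩ := hu
    refine ⟨x i, ⟨i, rfl⟩, ?_⟩
    intro v hv
    rw [Finset.mem_image] at hv
    obtain ⟨t, ht, rfl⟩ := hv
    have := congrArg (fun S => t ∈ S) hu'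
    simp only [Finset.mem_inter, ht, true_and, Finset.mem_filter, htr, eq_iff_iff] at this
    exact this)
  refine ⟨p, hp, j, hj.trans ?_⟩
  apply Set.union_subset
  · rintro _ ⟨i, rfl⟩; exact hx i
  · intro v hv
    rw [Finset.mem_coe, Finset.mem_image] at hv
    obtain ⟨t, _, rfl⟩ := hv
    exact hy t

set_option maxHeartbeats 1000000 in
theorem caseB (𝓕 : Set (Σ k : ℕ, SimpleGraph (Fin k))) {D : ℕ}
    {n : ℕ} (G : SimpleGraph (Fin n))
    (hD : ∀ (X : Set (Fin n)) (Y : Finset (Fin n)),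
      D ≤ Y.card → (∀ B ⊆ Y, ∃ x ∈ X, ∀ y ∈ Y, (G.Adj x y ↔ y ∈ B)) → BadSet 𝓕 G (X ∪ Y))
    {ι : Type} [Fintype ι] (z e k M T : ℕ) (hz0 : 2 ≤ z) (hzn : z ≤ n)
    (hT : T = z ^ 2) (hk : k = T ^ D) (hM : M = 12 * k * z) (he : e = 12 * (k * M) ^ 2)
    (hz2 : 12 * (k * M) ^ 2 ≤ 2 ^ z)
    (x : Fin k × Fin M → ι) (y : Fin T → ι) (hx : Function.Injective x) (hy : Function.Injective y)
    (hxy : ∀ a t, x a ≠ y t)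
    (hW : n < z * ((univ : Finset (Fin n)).filter (fun v => ¬ n ≤ e * (nball G z v).card)).card) :
    2 * (univ : Finset (ι → Fin n)).card ≤
      3 * ((univ : Finset (ι → Fin n)).filter (fun f => BadSet 𝓕 G (Set.range f))).card := by
  have hn : 0 < n := by omega
  set W := (univ : Finset (Fin n)).filter (fun v => ¬ n ≤ e * (nball G z v).card) with hWdef
  set N := (univ : Finset (ι → Fin n)).card with hN
  have hN' : N = n ^ Fintype.card ι := by simp [hN]
  obtain ⟨P1, hP1⟩ : ∃ P : Fin k → (ι → Fin n) → Prop, ∀ i h, P i h ↔ ∀ j, h (x (i, j)) ∉ W :=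
    ⟨_, fun _ _ => Iff.rfl⟩
  obtain ⟨P2, hP2⟩ : ∃ P : (Fin k × Fin M) × (Fin k × Fin M) → (ι → Fin n) → Prop, ∀ ab h, P ab h ↔
      (h (x ab.1) ∈ W ∧ h (x ab.2) ∈ nball G z (h (x ab.1))) := ⟨_, fun _ _ => Iff.rfl⟩
  obtain ⟨P3, hP3⟩ : ∃ P : (Fin k × Fin M) × (Fin k × Fin M) → (ι → Fin n) → Prop, ∀ ab h, P ab h ↔
      (n < z * symd G (h (x ab.1)) (h (x ab.2)) ∧
      ∀ t ∈ univ.image y, h t ∈ univ.filter (fun w => G.Adj (h (x ab.1)) w ↔ G.Adj (h (x ab.2)) w)) :=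
    ⟨_, fun _ _ => Iff.rfl⟩
  -- event 1
  have B1 := union_bd (univ : Finset (Fin k)) P1 (12 * k) N (by
    intro i _
    set a := (univ.filter (fun v => v ∉ W)).card with ha
    have h1 := pi_bound (fun t : ι => if ∃ j, x (i, j) = t then univ.filter (fun v => v ∉ W) else univ) ∅
      (univ.image (fun j => x (i, j))) (by simp) a (by simp) (by
        intro t ht
        simp only [Finset.mem_image, Finset.mem_univ, true_and] at ht
        simp only [ht, if_true]
        exact le_rfl)
    rw [Finset.card_image_of_injective _ (fun j j' h => by simpa using hx h)] at h1
    simp only [Finset.card_empty, pow_zero, mul_one, Finset.card_univ, Fintype.card_fin] at h1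
    have h2 : ((univ : Finset (ι → Fin n)).filter (P1 i)).card ≤
        (Fintype.piFinset (fun t : ι => if ∃ j, x (i, j) = t then univ.filter (fun v => v ∉ W) else univ)).card := by
      apply Finset.card_le_card
      intro h hh
      simp only [Finset.mem_filter, Finset.mem_univ, true_and, hP1] at hh
      rw [Fintype.mem_piFinset]
      intro t
      by_cases ht : ∃ j, x (i, j) = t
      · rw [if_pos ht]
        obtain ⟨j, rfl⟩ := ht
        simp only [Finset.mem_filter, Finset.mem_univ, true_and]
        exact hh j
      · rw [if_neg ht]; simp
    set cnt := ((univ : Finset (ι → Fin n)).filter (P1 i)).card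
    have h3 : cnt * n ^ M ≤ a ^ M * N := by
      rw [hN']
      exact (Nat.mul_le_mul_right _ h2).trans h1
    have h4 : a + W.card = n := by
      have := Finset.card_filter_add_card_filter_not (s := (univ : Finset (Fin n))) (fun v => v ∈ W)
      rw [Finset.card_univ, Fintype.card_fin, Finset.filter_mem_eq_inter, Finset.univ_inter] at this
      omega
    have h5 := bern a W.card M
    rw [h4, pow_succ] at h5
    have h6 : a ^ M * (12 * k) ≤ n ^ M := by
      refine Nat.le_of_mul_le_mul_right ?_ hn
      refine le_trans ?_ h5
      rw [mul_assoc]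
      apply Nat.mul_le_mul_left
      calc 12 * k * n ≤ 12 * k * (z * W.card) := Nat.mul_le_mul_left _ hW.le
        _ = M * W.card := by rw [hM]; ring
        _ ≤ _ := Nat.le_add_left _ _
    refine Nat.le_of_mul_le_mul_right ?_ (pow_pos hn M)
    calc 12 * k * cnt * n ^ M = 12 * k * (cnt * n ^ M) := by ring
      _ ≤ 12 * k * (a ^ M * N) := Nat.mul_le_mul_left _ h3
      _ = (a ^ M * (12 * k)) * N := by ring
      _ ≤ n ^ M * N := Nat.mul_le_mul_right _ h6
      _ = N * n ^ M := by ring) (by simp)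
  have hoff : 12 * ((univ : Finset (Fin k × Fin M)).offDiag).card ≤ 12 * (k * M) ^ 2 := by
    rw [Finset.offDiag_card]
    simp only [Finset.card_univ, Fintype.card_prod, Fintype.card_fin]
    have : k * M * (k * M) = (k * M) ^ 2 := by ring
    omega
  -- event 2
  have B2 := union_bd ((univ : Finset (Fin k × Fin M)).offDiag) P2 e N (by
    rintro ⟨a, b⟩ hab
    simp only [Finset.mem_offDiag, Finset.mem_univ, true_and] at hab
    have h1 := cnt2 (x a) (x b) (fun h => hab (hx h)) ∅ (by simp) (by simp)
      (fun u v => u ∈ W ∧ v ∈ nball G z u) (fun _ _ => univ) n (fun u v _ => by simp)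
    simp only [Finset.notMem_empty, false_imp_iff, imp_true_iff, and_true, Finset.card_empty, pow_zero, mul_one, one_mul] at h1
    rw [← hN'] at h1
    have h0 : ((univ : Finset (ι → Fin n)).filter (P2 (a, b))).card ≤
        ((univ : Finset (ι → Fin n)).filter (fun h => h (x a) ∈ W ∧ h (x b) ∈ nball G z (h (x a)))).card := by
      apply Finset.card_le_card
      intro h hh
      simp only [Finset.mem_filter, Finset.mem_univ, true_and, hP2] at hh ⊢
      exact hh
    replace h1 := (Nat.mul_le_mul_right (n ^ 2) h0).trans h1
    have h2 : e * ((univ : Finset (Fin n × Fin n)).filter (fun x => x.1 ∈ W ∧ x.2 ∈ nball G z x.1)).card ≤ n ^ 2 := by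
      rw [Finset.card_filter, ← Finset.univ_product_univ, Finset.sum_product]
      simp only [← Finset.card_filter]
      rw [Finset.mul_sum]
      calc _ ≤ ∑ u : Fin n, n := by
            apply Finset.sum_le_sum
            intro u _
            by_cases hu : u ∈ W
            · simp only [hu, true_and, Finset.filter_mem_eq_inter, Finset.univ_inter]
              simp only [hWdef, Finset.mem_filter, Finset.mem_univ, true_and, not_le] at hu
              exact hu.le
            · simp [hu]
        _ = _ := by simp; ring
    refine Nat.le_of_mul_le_mul_right ?_ (pow_pos hn 2)
    rw [mul_assoc]
    refine (Nat.mul_le_mul_left e h1).trans ?_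
    rw [← mul_assoc, mul_comm N]
    refine Nat.mul_le_mul_right N ?_
    convert h2) (by rw [he]; exact hoff)
  -- event 3
  have B3 := union_bd ((univ : Finset (Fin k × Fin M)).offDiag) P3 (2 ^ z) N (by
    rintro ⟨a, b⟩ hab
    simp only [Finset.mem_offDiag, Finset.mem_univ, true_and] at hab
    have hnot : ∀ a, x a ∉ univ.image y := by
      intro a ha
      simp only [Finset.mem_image, Finset.mem_univ, true_and] at ha
      obtain ⟨t, ht⟩ := ha
      exact hxy a t ht.symm
    set s := n / z + 1 with hs
    have hsn : s ≤ n := by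
      have : n / z ≤ n / 2 := Nat.div_le_div_left hz0 (by norm_num)
      omega
    have hzs : n < z * s := by
      have := Nat.div_add_mod n z
      have h2 := Nat.mod_lt n (show z > 0 by omega)
      rw [hs, mul_add]; omega
    have h1 := cnt2 (x a) (x b) (fun h => hab (hx h)) (univ.image y) (hnot a) (hnot b)
      (fun u v => n < z * symd G u v) (fun u v => univ.filter (fun w => G.Adj u w ↔ G.Adj v w)) (n - s) (by
        intro u v huv
        have h2 : n / z < symd G u v := by
          rw [Nat.div_lt_iff_lt_mul (by omega)]
          rwa [mul_comm] at huv
        have h3 := Finset.card_filter_add_card_filter_not (s := (univ : Finset (Fin n))) (fun w => G.Adj u w ↔ G.Adj v w)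
        rw [Finset.card_univ, Fintype.card_fin] at h3
        unfold symd at h2
        omega)
    rw [Finset.card_image_of_injective _ hy, Finset.card_univ, Fintype.card_fin, ← hN'] at h1
    replace h1 : ((univ : Finset (ι → Fin n)).filter (P3 (a, b))).card * n ^ 2 * n ^ T ≤ n ^ 2 * ((n - s) ^ T * N) := by
      refine le_trans (Nat.mul_le_mul_right _ (Nat.mul_le_mul_right _ (Finset.card_le_card ?_))) (h1.trans (Nat.mul_le_mul_right _
        ((Finset.card_le_univ _).trans (by simp [sq]))))
      intro h hh
      rw [Finset.mem_filter, hP3] at hh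
      exact (@Finset.mem_filter _ _ (_) _ _).2 hh
    have h3 := bern (n - s) s z
    rw [Nat.sub_add_cancel hsn, pow_succ] at h3
    have h4 : (n - s) ^ z * 2 ≤ n ^ z := by
      refine Nat.le_of_mul_le_mul_right ?_ hn
      refine le_trans ?_ h3
      rw [mul_assoc]
      apply Nat.mul_le_mul_left
      omega
    have h5 : (n - s) ^ T * 2 ^ z ≤ n ^ T := by
      have := Nat.pow_le_pow_left h4 z
      rwa [mul_pow, ← pow_mul, ← pow_mul, ← sq, ← hT] at this
    refine Nat.le_of_mul_le_mul_right ?_ (pow_pos hn 2)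
    refine Nat.le_of_mul_le_mul_right ?_ (pow_pos hn T)
    set cnt := ((univ : Finset (ι → Fin n)).filter (P3 (a, b))).card
    calc 2 ^ z * cnt * n ^ 2 * n ^ T = 2 ^ z * (cnt * n ^ 2 * n ^ T) := by ring
      _ ≤ 2 ^ z * (n ^ 2 * ((n - s) ^ T * N)) :=
          Nat.mul_le_mul_left _ h1
      _ = ((n - s) ^ T * 2 ^ z) * (n ^ 2 * N) := by ring
      _ ≤ n ^ T * (n ^ 2 * N) := Nat.mul_le_mul_right _ h5
      _ = N * n ^ 2 * n ^ T := by ring) (hoff.trans hz2)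
  set E1 := (univ : Finset (ι → Fin n)).filter (fun h => ∃ i ∈ (univ : Finset (Fin k)), P1 i h)
  have B1' : 12 * E1.card ≤ N := by convert B1
  set E2 := (univ : Finset (ι → Fin n)).filter (fun h => ∃ ab ∈ (univ : Finset (Fin k × Fin M)).offDiag, P2 ab h)
  set E3 := (univ : Finset (ι → Fin n)).filter (fun h => ∃ ab ∈ (univ : Finset (Fin k × Fin M)).offDiag, P3 ab h)
  have hcov : (univ : Finset (ι → Fin n)) ⊆
      (univ : Finset (ι → Fin n)).filter (fun f => BadSet 𝓕 G (Set.range f)) ∪ E1 ∪ E2 ∪ E3 := by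
    intro h _
    by_contra hcon
    simp only [Finset.mem_union, not_or] at hcon
    obtain ⟨⟨⟨hbad, h1⟩, h2⟩, h3⟩ := hcon
    apply hbad
    simp only [Finset.mem_filter, Finset.mem_univ, true_and]
    have h1' : ∀ i, ∃ j, h (x (i, j)) ∈ W := by
      intro i
      by_contra hc
      push Not at hc
      exact h1 (Finset.mem_filter.2 ⟨Finset.mem_univ _, i, Finset.mem_univ _, (hP1 _ _).2 hc⟩)
    choose j hj using h1'
    apply caseB_det 𝓕 G hD (T := T) (k := k) (by rw [hT]; nlinarith) hk.ge (Set.range h) (fun i => h (x (i, j i))) (fun t => h (y t))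
      (fun i => ⟨_, rfl⟩) (fun t => ⟨_, rfl⟩)
    intro i i' hii
    have hne : ((i, j i), (i', j i')) ∈ (univ : Finset (Fin k × Fin M)).offDiag := by
      simp only [Finset.mem_offDiag, Finset.mem_univ, true_and, ne_eq, Prod.mk.injEq, not_and]
      intro h; exact absurd h hii
    have hfar : n < z * symd G (h (x (i, j i))) (h (x (i', j i'))) := by
      by_contra hc
      exact h2 (Finset.mem_filter.2 ⟨Finset.mem_univ _, _, hne, (hP2 _ _).2 ⟨hj i, by
        simp only [nball, Finset.mem_filter, Finset.mem_univ, true_and]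
        exact not_lt.1 hc⟩⟩)
    by_contra hc
    push Not at hc
    refine h3 (Finset.mem_filter.2 ⟨Finset.mem_univ _, _, hne, (hP3 _ _).2 ⟨hfar, ?_⟩⟩)
    intro t ht
    simp only [Finset.mem_image, Finset.mem_univ, true_and] at ht
    obtain ⟨t', rfl⟩ := ht
    simp only [Finset.mem_filter, Finset.mem_univ, true_and]
    exact hc t'
  have hcard := Finset.card_le_card hcov
  have u1 := Finset.card_union_le ((univ : Finset (ι → Fin n)).filter (fun f => BadSet 𝓕 G (Set.range f)) ∪ E1 ∪ E2) E3
  have u2 := Finset.card_union_le ((univ : Finset (ι → Fin n)).filter (fun f => BadSet 𝓕 G (Set.range f)) ∪ E1) E2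
  have u3 := Finset.card_union_le ((univ : Finset (ι → Fin n)).filter (fun f => BadSet 𝓕 G (Set.range f))) E1
  rw [← hN] at hcard
  omega

theorem combine (𝓕 : Set (Σ k : ℕ, SimpleGraph (Fin k))) {n q : ℕ} (G : SimpleGraph (Fin n)) (hn : 0 < n)
    (hq : q ≤ n) {ι : Type} [Fintype ι] (hι : Fintype.card ι ≤ q)
    (h : 2 * (univ : Finset (ι → Fin n)).card ≤
      3 * ((univ : Finset (ι → Fin n)).filter (fun f => BadSet 𝓕 G (Set.range f))).card) :
    2 * n.choose q ≤ 3 * ((univ.powersetCard q).filter (fun Q : Finset (Fin n) => BadSet 𝓕 G (Q : Set (Fin n)))).card := by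
  have ht := transfer hq hι (BadSet 𝓕 G) (by
    rintro X Y hXY ⟨p, hp, e, he⟩
    exact ⟨p, hp, e, he.trans hXY⟩)
  have hpos : 0 < (univ : Finset (ι → Fin n)).card := by
    have : Nonempty (Fin n) := ⟨⟨0, hn⟩⟩
    exact Finset.card_pos.2 Finset.univ_nonempty
  set U := (univ : Finset (ι → Fin n)).card
  set B := ((univ : Finset (ι → Fin n)).filter (fun f => BadSet 𝓕 G (Set.range f))).card
  set S := ((univ.powersetCard q).filter (fun Q : Finset (Fin n) => BadSet 𝓕 G (Q : Set (Fin n)))).card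
  refine Nat.le_of_mul_le_mul_right ?_ hpos
  calc 2 * n.choose q * U = (2 * U) * n.choose q := by ring
    _ ≤ (3 * B) * n.choose q := Nat.mul_le_mul_right _ h
    _ = 3 * (B * n.choose q) := by ring
    _ ≤ 3 * (S * U) := Nat.mul_le_mul_left _ ht
    _ = 3 * S * U := by ring

theorem lemA (𝓕 : Set (Σ k : ℕ, SimpleGraph (Fin k)))
    (hblow : BlowupQuality (InducedFree 𝓕)) {n : ℕ} (G : SimpleGraph (Fin n)) (ε : ℝ) (hε : 0 < ε)
    (hfar : Far (InducedFree 𝓕) G ε) {ι : Type} [Fintype ι] (z e q : ℕ)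
    (hι : Fintype.card ι = (e+1)*z*z) (hz : 42 ≤ ε*z) (hz0 : 0<z) (hzn : z ≤ n) (hq : q ≤ n)
    (hs : (e+1)*z*z ≤ q)
    (hEx : z * ((univ : Finset (Fin n)).filter (fun v => ¬ n ≤ e * (nball G z v).card)).card ≤ n) :
    2 * n.choose q ≤ 3 * ((univ.powersetCard q).filter (fun Q : Finset (Fin n) => BadSet 𝓕 G (Q : Set (Fin n)))).card := by
  exact combine 𝓕 G (by omega) hq (hι.le.trans hs) (caseA 𝓕 hblow G ε hε hfar z e hι hz hz0 hzn hEx)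

theorem lemB (𝓕 : Set (Σ k : ℕ, SimpleGraph (Fin k))) {D : ℕ}
    {n : ℕ} (G : SimpleGraph (Fin n))
    (hD : ∀ (X : Set (Fin n)) (Y : Finset (Fin n)),
      D ≤ Y.card → (∀ B ⊆ Y, ∃ x ∈ X, ∀ y ∈ Y, (G.Adj x y ↔ y ∈ B)) → BadSet 𝓕 G (X ∪ Y))
    {ι : Type} [Fintype ι] (z e k M T q : ℕ) (hz0 : 2 ≤ z) (hzn : z ≤ n)
    (hT : T = z ^ 2) (hk : k = T ^ D) (hM : M = 12 * k * z) (he : e = 12 * (k * M) ^ 2)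
    (hz2 : 12 * (k * M) ^ 2 ≤ 2 ^ z)
    (x : Fin k × Fin M → ι) (y : Fin T → ι) (hx : Function.Injective x) (hy : Function.Injective y)
    (hxy : ∀ a t, x a ≠ y t) (hι : Fintype.card ι ≤ q) (hq : q ≤ n)
    (hW : n < z * ((univ : Finset (Fin n)).filter (fun v => ¬ n ≤ e * (nball G z v).card)).card) :
    2 * n.choose q ≤ 3 * ((univ.powersetCard q).filter (fun Q : Finset (Fin n) => BadSet 𝓕 G (Q : Set (Fin n)))).card := by
  exact combine 𝓕 G (by omega) hq hι (caseB 𝓕 G hD z e k M T hz0 hzn hT hk hM he hz2 x y hx hy hxy hW)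

theorem lemAB (𝓕 : Set (Σ k : ℕ, SimpleGraph (Fin k)))
    (hblow : BlowupQuality (InducedFree 𝓕)) {D n : ℕ} (G : SimpleGraph (Fin n)) (ε : ℝ) (hε : 0 < ε)
    (hfar : Far (InducedFree 𝓕) G ε)
    (hD : ∀ (X : Set (Fin n)) (Y : Finset (Fin n)),
      D ≤ Y.card → (∀ B ⊆ Y, ∃ x ∈ X, ∀ y ∈ Y, (G.Adj x y ↔ y ∈ B)) → BadSet 𝓕 G (X ∪ Y))
    (z q : ℕ) (hz0 : 2 ≤ z) (hz : 42 ≤ ε*z) (hzn : z ≤ n) (hq : q ≤ n)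
    (hs : 1729 * z ^ (8 * D + 4) ≤ q) (hz2 : 1728 * z ^ (8 * D + 2) ≤ 2 ^ z) :
    2 * n.choose q ≤ 3 * ((univ.powersetCard q).filter (fun Q : Finset (Fin n) => BadSet 𝓕 G (Q : Set (Fin n)))).card := by
  obtain ⟨T, hT⟩ : ∃ T, T = z ^ 2 := ⟨_, rfl⟩
  obtain ⟨k, hk⟩ : ∃ k, k = T ^ D := ⟨_, rfl⟩
  obtain ⟨M, hM⟩ : ∃ M, M = 12 * k * z := ⟨_, rfl⟩
  obtain ⟨e, he⟩ : ∃ e, e = 12 * (k * M) ^ 2 := ⟨_, rfl⟩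
  have hk' : k = z ^ (2 * D) := by rw [hk, hT, ← pow_mul]
  have hkM : k * M = 12 * z ^ (4 * D + 1) := by rw [hM, hk']; ring
  have he' : e = 1728 * z ^ (8 * D + 2) := by rw [he, hkM]; ring
  have p1 : z ^ 2 ≤ z ^ (8 * D + 4) := Nat.pow_le_pow_right (by omega) (by omega)
  have p2 : z ^ (4 * D + 1) ≤ z ^ (8 * D + 4) := Nat.pow_le_pow_right (by omega) (by omega)
  by_cases hEx : z * ((univ : Finset (Fin n)).filter (fun v => ¬ n ≤ e * (nball G z v).card)).card ≤ n
  · refine lemA 𝓕 hblow G ε hε hfar (ι := Fin ((e+1)*z*z)) z e q (by simp) hz (by omega) hzn hq ?_ hEx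
    have : (e+1)*z*z = 1728 * z ^ (8 * D + 4) + z ^ 2 := by rw [he']; ring
    omega
  · refine lemB 𝓕 G hD (ι := (Fin k × Fin M) ⊕ Fin T) z e k M T q hz0 hzn hT hk hM he ?_ Sum.inl Sum.inr
      Sum.inl_injective Sum.inr_injective (by simp) ?_ hq (not_le.1 hEx)
    · rw [← he, he']; exact hz2
    · simp only [Fintype.card_sum, Fintype.card_prod, Fintype.card_fin]
      omega

theorem exp_ev (d : ℕ) : ∃ z0 : ℕ, ∀ z ≥ z0, 1728 * z ^ d ≤ 2 ^ z := by
  have h := tendsto_pow_const_div_const_pow_of_one_lt d (show (1:ℝ) < 2 by norm_num)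
  have h2 := h.eventually (gt_mem_nhds (show (0:ℝ) < 1 / 1728 by norm_num))
  rw [Filter.eventually_atTop] at h2
  obtain ⟨z0, hz0⟩ := h2
  refine ⟨z0, fun z hz => ?_⟩
  have := hz0 z hz
  rw [div_lt_div_iff₀ (by positivity) (by norm_num)] at this
  have h3 : (1728 * z ^ d : ℝ) ≤ 2 ^ z := by linarith
  exact_mod_cast h3

/-- If `𝓕` contains a bipartite graph, a co-bipartite graph and a split graph,
and being induced `𝓕`-free has the blowup quality, then being induced `𝓕`-free is easily
testable. -/
theorem easily_testable_of_blowup_quality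
    (𝓕 : Set (Σ k : ℕ, SimpleGraph (Fin k)))
    (hbip : ∃ p ∈ 𝓕, IsBipGraph p.2)
    (hcobip : ∃ p ∈ 𝓕, IsCoBipGraph p.2)
    (hsplit : ∃ p ∈ 𝓕, IsSplitGraph p.2)
    (hblow : BlowupQuality (InducedFree 𝓕)) :
    EasilyTestable (InducedFree 𝓕) := by
  obtain ⟨D, hD⟩ := shatter_bad 𝓕 hbip hcobip hsplit
  obtain ⟨z0, hz0⟩ := exp_ev (8 * D + 2)
  obtain ⟨Z, hZ⟩ : ∃ Z, Z = 42 + z0 := ⟨_, rfl⟩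
  obtain ⟨A, hA⟩ : ∃ A, A = 8 * D + 4 := ⟨_, rfl⟩
  obtain ⟨K, hK⟩ : ∃ K, K = 1729 * (2 * Z) ^ A := ⟨_, rfl⟩
  refine ⟨((A + K : ℕ) : ℝ), by exact_mod_cast (by omega), ?_⟩
  intro ε hε hε2 n G hn hfar
  have hpw : ε ^ (-((A + K : ℕ) : ℝ)) = (ε⁻¹) ^ (A + K) := by
    rw [Real.rpow_neg hε.le, Real.rpow_natCast, inv_pow]
  rw [hpw] at hn ⊢
  have hinv : 2 ≤ ε⁻¹ := by
    rw [le_inv_comm₀ (by norm_num) hε]; linarith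
  set q := ⌈(ε⁻¹) ^ (A + K)⌉₊ with hqdef
  have hq : q ≤ n := Nat.ceil_le.2 hn
  set z := ⌈(Z : ℝ) * ε⁻¹⌉₊ with hzdef
  have hz1 : (Z : ℝ) * ε⁻¹ ≤ z := Nat.le_ceil _
  have hZ42 : (42 : ℝ) ≤ Z := by rw [hZ]; push_cast; linarith [(Nat.cast_nonneg z0 : (0:ℝ) ≤ z0)]
  have hZz : (Z : ℝ) ≤ z := by nlinarith
  have hZz' : Z ≤ z := by exact_mod_cast hZz
  have hzup : (z : ℝ) ≤ 2 * Z * ε⁻¹ := by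
    have := (Nat.ceil_lt_add_one (show 0 ≤ (Z : ℝ) * ε⁻¹ by positivity)).le
    nlinarith
  have hz42 : 42 ≤ ε * z := by
    have : ε * ((Z : ℝ) * ε⁻¹) ≤ ε * z := mul_le_mul_of_nonneg_left hz1 hε.le
    have h2 : ε * ((Z : ℝ) * ε⁻¹) = Z := by field_simp
    linarith
  have hsz : 1729 * z ^ A ≤ q := by
    have h1 : (1729 * z ^ A : ℝ) ≤ (ε⁻¹) ^ (A + K) := by
      calc (1729 * z ^ A : ℝ) ≤ 1729 * (2 * Z * ε⁻¹) ^ A := by gcongr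
        _ = K * (ε⁻¹) ^ A := by rw [hK, mul_pow]; push_cast; ring
        _ ≤ 2 ^ K * (ε⁻¹) ^ A := by
          gcongr
          exact_mod_cast Nat.lt_two_pow_self.le
        _ ≤ (ε⁻¹) ^ K * (ε⁻¹) ^ A := by gcongr
        _ = _ := by rw [pow_add]; ring
    have h2 := h1.trans (Nat.le_ceil _)
    exact_mod_cast h2
  have hzn : z ≤ n := by
    have h1 : z ^ 1 ≤ z ^ A := Nat.pow_le_pow_right (by omega) (by omega)
    rw [pow_one] at h1
    omega
  rw [hA] at hsz
  have hmain := lemAB 𝓕 hblow G ε hε hfar (hD n G) z q (by omega) hz42 hzn hq hsz (hz0 z (by omega))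
  have hsub : ((univ.powersetCard q).filter (fun Q : Finset (Fin n) => BadSet 𝓕 G (Q : Set (Fin n)))).card ≤
      (((Finset.univ : Finset (Fin n)).powersetCard q).filter
        fun Q => ∃ h : Q.card = q, inducedOn G Q h ∉ InducedFree 𝓕 q).card := by
    apply Finset.card_le_card
    intro Q hQ
    rw [Finset.mem_filter] at hQ ⊢
    obtain ⟨hQ1, p, hp, e, he⟩ := hQ
    have hc := (Finset.mem_powersetCard.1 hQ1).2
    refine ⟨hQ1, hc, ?_⟩
    intro hfree
    have hmem : ∀ i, e i ∈ Q := fun i => by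
      have := he ⟨i, rfl⟩
      exact_mod_cast this
    refine (hfree p hp).false ⟨⟨fun i => (Q.orderIsoOfFin hc).symm ⟨e i, hmem i⟩, ?_⟩, ?_⟩
    · intro i j hij
      have := (Q.orderIsoOfFin hc).symm.injective hij
      exact e.injective (congrArg Subtype.val this)
    · intro i j
      change G.Adj ((Q.orderIsoOfFin hc) ((Q.orderIsoOfFin hc).symm ⟨e i, hmem i⟩) : Fin n)
        ((Q.orderIsoOfFin hc) ((Q.orderIsoOfFin hc).symm ⟨e j, hmem j⟩) : Fin n) ↔ _
      rw [OrderIso.apply_symm_apply, OrderIso.apply_symm_apply]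
      exact e.map_rel_iff
  rw [Finset.card_powersetCard, Finset.card_univ, Fintype.card_fin]
  have h3 : 2 * n.choose q ≤ 3 * (((Finset.univ : Finset (Fin n)).powersetCard q).filter
        fun Q => ∃ h : Q.card = q, inducedOn G Q h ∉ InducedFree 𝓕 q).card := hmain.trans (Nat.mul_le_mul_left _ hsub)
  have h4 : (2 * (n.choose q : ℝ)) ≤ 3 * ((((Finset.univ : Finset (Fin n)).powersetCard q).filter
        fun Q => ∃ h : Q.card = q, inducedOn G Q h ∉ InducedFree 𝓕 q).card : ℝ) := by exact_mod_cast h3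
  linarith

end
end
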